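/- arXiv:2509.26237 — 3 statements merged into one kernel-verified Lean document; each statement's English description precedes it below -/
import Mathlib

section
/- Let K be a field and n ≥ 2. Let A, B ∈ GL(n, K) be cyclic matrices. Then for every nonprimary matrix M ∈ GL(n, K) with det M = det A · det B, there exist X, Y ∈ GL(n, K) such that M = (X A X⁻¹) · (Y B Y⁻¹). -/
open Matrix Polynomial

noncomputable section

/-- A matrix is cyclic if its characteristic polynomial equals its minimal polynomial. -/
def IsCyclicMat {ι : Type*} [Fintype ι] [DecidableEq ι] {K : Type*} [Field K]
    (A : Matrix ι ι K) : Prop :=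
  A.charpoly = minpoly K A

/-- A matrix is nonprimary if its characteristic polynomial is a product of two
coprime nonconstant monic polynomials. -/
def IsNonprimary {ι : Type*} [Fintype ι] [DecidableEq ι] {K : Type*} [Field K]
    (M : Matrix ι ι K) : Prop :=
  ∃ f g : Polynomial K, f.Monic ∧ g.Monic ∧ 0 < f.natDegree ∧ 0 < g.natDegree ∧
    IsCoprime f g ∧ M.charpoly = f * g

/-- A transvection: `T ≠ 1`, `(T - 1)² = 0` and `rank (T - 1) = 1`. -/
def IsTransvection {ι : Type*} [Fintype ι] [DecidableEq ι] {K : Type*} [Field K]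
    (T : Matrix ι ι K) : Prop :=
  T ≠ 1 ∧ (T - 1) * (T - 1) = 0 ∧ (T - 1).rank = 1

/-!
A nonprimary `M` is conjugate to a block diagonal matrix whose blocks `M₁` and `M₂` are annihilated
by coprime polynomials, hence, by solvability of the Sylvester equation, to `[[M₁, Z], [0, M₂]]`
for every `Z`. Factor `M₁ = P Q` and `M₂ = R C` such that `Pᵀ` and `Qᵀ` share a cyclic vector `w`,
`R` and `C` share a cyclic vector `u`, `det P det R = det A` and `det Q det C = det B`; such factors
come from an LU factorization of a conjugate of each block. With `T = [[1, 0], [u wᵀ, 1]]`,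
the product of `[[P, Y₁], [0, R]] T` and `T⁻¹ [[Q, Y₂], [0, C]]` has the shape `[[M₁, Z], [0, M₂]]`.
Both factors are cyclic. The characteristic polynomial of the first one is `χ_P χ_R - X q`, where
`q` depends linearly on `Y₁` and takes every value of degree at most `deg χ_P + deg χ_R - 2`: for
`Y₁` of rank one it is the product of two arbitrary polynomials of degrees less than `deg χ_P` and
`deg χ_R`. So `Y₁` can be chosen to make the first factor conjugate to `A`, and likewise `Y₂` for
the second factor and `B`.
-/

section CyclicVectors

variable {ι K : Type*} [Fintype ι] [Field K]

/-- `v` is a cyclic vector of `A`: no proper subspace containing `v` is stable under `A`. -/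
def IsCyclicVector (A : Matrix ι ι K) (v : ι → K) : Prop :=
  ∀ W : Submodule K (ι → K), v ∈ W → (∀ x ∈ W, A *ᵥ x ∈ W) → W = ⊤

theorem IsCyclicVector.neg {A : Matrix ι ι K} {v : ι → K} (h : IsCyclicVector A v) :
    IsCyclicVector A (-v) :=
  fun W hv hW => h W (by simpa using W.neg_mem hv) hW

variable [DecidableEq ι]

theorem IsCyclicVector.conj {A S : Matrix ι ι K} {v : ι → K} (h : IsCyclicVector A v)
    (hS : IsUnit S) : IsCyclicVector (S * A * S⁻¹) (S *ᵥ v) := by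
  intro W hv hW
  have hdet := (isUnit_iff_isUnit_det S).1 hS
  have htop : W.comap S.mulVecLin = ⊤ := by
    refine h _ hv fun x hx => ?_
    have := hW _ hx
    rwa [mulVecLin_apply, mulVec_mulVec, nonsing_inv_mul_cancel_right _ _ hdet,
      ← mulVec_mulVec] at this
  refine eq_top_iff.2 fun x _ => ?_
  have hx : S⁻¹ *ᵥ x ∈ W.comap S.mulVecLin := htop ▸ Submodule.mem_top
  simpa [mulVec_mulVec, mul_nonsing_inv _ hdet] using hx

theorem aeval_toLin' (A : Matrix ι ι K) (p : K[X]) :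
    aeval (toLin' A) p = toLin' (aeval A p) :=
  aeval_algHom_apply (toLinAlgEquiv' : Matrix ι ι K ≃ₐ[K] _) A p

theorem aeval_mulVec_mem (A : Matrix ι ι K) {W : Submodule K (ι → K)}
    (hW : ∀ x ∈ W, A *ᵥ x ∈ W) (p : K[X]) {x : ι → K} (hx : x ∈ W) :
    aeval A p *ᵥ x ∈ W := by
  have := aeval_apply_smul_mem_of_le_comap' hx p (toLin' A) (q := W) hW
  rwa [aeval_toLin'] at this

theorem isCyclicVector_of_minpoly_dvd (A : Matrix ι ι K) (v : ι → K)
    (hA : IsCyclicMat A) (hv : ∀ p : K[X], aeval A p *ᵥ v = 0 → minpoly K A ∣ p) :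
    IsCyclicVector A v := by
  intro W hvW hW
  let φ : degreeLT K (Fintype.card ι) →ₗ[K] W :=
    { toFun := fun p => ⟨aeval A (p : K[X]) *ᵥ v, aeval_mulVec_mem A hW _ hvW⟩
      map_add' := fun p q => by ext; simp [add_mulVec]
      map_smul' := fun a p => by ext; simp [smul_mulVec] }
  have hφ : Function.Injective φ := by
    refine (injective_iff_map_eq_zero φ).2 fun p hp => Subtype.ext ?_
    refine eq_zero_of_dvd_of_degree_lt (hv p (congrArg Subtype.val hp)) ?_
    rw [← hA, A.charpoly_degree_eq_dim]
    exact mem_degreeLT.1 p.2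
  refine Submodule.eq_top_of_finrank_eq (le_antisymm (Submodule.finrank_le W) ?_)
  calc Module.finrank K (ι → K) = Module.finrank K (degreeLT K (Fintype.card ι)) := by
        simp [(degreeLTEquiv K (Fintype.card ι)).finrank_eq]
    _ ≤ Module.finrank K W := LinearMap.finrank_le_finrank_of_injective hφ

theorem IsCyclicMat.exists_isCyclicVector {A : Matrix ι ι K} (hA : IsCyclicMat A) :
    ∃ v, IsCyclicVector A v := by
  obtain ⟨x, hx⟩ := Module.exists_ker_toSpanSingleton_eq_annihilator K[X]
    (Module.AEval' (toLin' A))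
  obtain ⟨v, rfl⟩ := (Module.AEval'.of _).surjective x
  rw [← span_minpoly_eq_annihilator, minpoly_toLin'] at hx
  refine ⟨v, isCyclicVector_of_minpoly_dvd A v hA fun p hp => ?_⟩
  rw [← Ideal.mem_span_singleton, ← hx, LinearMap.mem_ker, LinearMap.toSpanSingleton_apply,
    Module.AEval'.of, ← Module.AEval.of_aeval_smul, aeval_toLin']
  simp [hp]

end CyclicVectors

section ResolventPoly

variable {ι R : Type*} [Fintype ι] [DecidableEq ι] [CommRing R]

theorem det_sub_vecMulVec_of_isRegular {A : Matrix ι ι R} (hA : IsRegular A.det) (y w : ι → R) :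
    (A - vecMulVec y w).det = A.det - w ⬝ᵥ A.adjugate *ᵥ y := by
  have hadj : A.adjugate * (A - vecMulVec y w)
      = scalar ι A.det - vecMulVec (A.adjugate *ᵥ y) w := by
    rw [mul_sub, adjugate_mul, mul_vecMulVec, scalar_apply, smul_one_eq_diagonal]
  refine (hA.pow (Fintype.card ι - 1)).left ?_
  change A.det ^ _ * _ = A.det ^ _ * _
  rw [← det_adjugate, ← det_mul, hadj, ← eval_charpoly, charpoly_vecMulVec, det_adjugate]
  rcases isEmpty_or_nonempty ι with h | h
  · simp
  · rw [eval_sub, eval_smul, eval_pow, eval_pow, eval_X, smul_eq_mul, dotProduct_comm, mul_sub,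
      ← pow_succ, Nat.sub_add_cancel Fintype.card_pos, mul_comm (A.det ^ _) (w ⬝ᵥ _)]

/-- The numerator `wᵀ adj(X - A) y` of the matrix entry `wᵀ (X - A)⁻¹ y` of the resolvent of `A`,
whose denominator is the characteristic polynomial, as a linear function of `y`. -/
def resolventPoly (A : Matrix ι ι R) (w : ι → R) : (ι → R) →ₗ[R] R[X] where
  toFun y := (C ∘ w) ⬝ᵥ A.charmatrix.adjugate *ᵥ (C ∘ y)
  map_add' y z := by
    rw [← dotProduct_add, ← mulVec_add]
    congr 2
    ext i : 1
    simp
  map_smul' a y := by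
    rw [RingHom.id_apply, smul_eq_C_mul, ← smul_eq_mul, ← dotProduct_smul, ← mulVec_smul]
    congr 2
    ext i : 1
    simp

theorem resolventPoly_apply (A : Matrix ι ι R) (w y : ι → R) :
    resolventPoly A w y = (C ∘ w) ⬝ᵥ A.charmatrix.adjugate *ᵥ (C ∘ y) :=
  rfl

theorem resolventPoly_transpose (A : Matrix ι ι R) (w y : ι → R) :
    resolventPoly Aᵀ w y = resolventPoly A y w := by
  rw [resolventPoly_apply, resolventPoly_apply, charmatrix_transpose, ← adjugate_transpose,
    mulVec_transpose, dotProduct_comm, dotProduct_mulVec]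

theorem charpoly_add_vecMulVec (A : Matrix ι ι R) (y w : ι → R) :
    (A + vecMulVec y w).charpoly = A.charpoly - resolventPoly A w y := by
  have hchar : (A + vecMulVec y w).charmatrix = A.charmatrix - vecMulVec (C ∘ y) (C ∘ w) := by
    ext i j : 2
    simp [charmatrix, vecMulVec_apply, sub_sub]
  rw [charpoly, hchar, det_sub_vecMulVec_of_isRegular A.charpoly_monic.isRegular]
  rfl

theorem degree_resolventPoly_lt [Nontrivial R] (A : Matrix ι ι R) (w y : ι → R) :
    (resolventPoly A w y).degree < Fintype.card ι := by
  rw [← sub_sub_cancel A.charpoly (resolventPoly A w y), ← charpoly_add_vecMulVec,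
    ← A.charpoly_degree_eq_dim]
  refine degree_sub_lt_left ?_ A.charpoly_monic.ne_zero ?_
  · simp only [charpoly_degree_eq_dim]
  · simp only [A.charpoly_monic.leadingCoeff, (charpoly_monic _).leadingCoeff]

theorem resolventPoly_mulVec (A : Matrix ι ι R) (w y : ι → R) :
    resolventPoly A w (A *ᵥ y) = X * resolventPoly A w y - C (w ⬝ᵥ y) * A.charpoly := by
  have hchar : A.charmatrix *ᵥ (C ∘ y) = (X : R[X]) • (C ∘ y) - C ∘ (A *ᵥ y) := by
    ext i : 1
    simp [charmatrix, sub_mulVec, RingHom.map_mulVec]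
  have hdot : (C ∘ w) ⬝ᵥ (C ∘ y) = (C (w ⬝ᵥ y) : R[X]) := (RingHom.map_dotProduct C w y).symm
  calc resolventPoly A w (A *ᵥ y)
      = (C ∘ w) ⬝ᵥ A.charmatrix.adjugate *ᵥ ((X : R[X]) • (C ∘ y) - A.charmatrix *ᵥ (C ∘ y)) := by
        rw [hchar, sub_sub_cancel, resolventPoly_apply]
    _ = X * resolventPoly A w y - C (w ⬝ᵥ y) * A.charpoly := by
        rw [mulVec_sub, mulVec_smul, mulVec_mulVec, adjugate_mul, smul_mulVec, one_mulVec,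
          dotProduct_sub, dotProduct_smul, dotProduct_smul, hdot, resolventPoly_apply,
          smul_eq_mul, smul_eq_mul, mul_comm (det _), charpoly]

theorem coeff_resolventPoly [Nontrivial R] (A : Matrix ι ι R) (w y : ι → R) :
    (resolventPoly A w y).coeff (Fintype.card ι - 1) = w ⬝ᵥ y := by
  rcases isEmpty_or_nonempty ι with h | h
  · simp [resolventPoly_apply]
  · have hcoeff := congrArg (fun p => p.coeff (Fintype.card ι)) (resolventPoly_mulVec A w y)
    have hlead : A.charpoly.coeff (Fintype.card ι) = 1 := by
      simpa only [Monic, leadingCoeff, charpoly_natDegree_eq_dim] using A.charpoly_monic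
    rw [coeff_eq_zero_of_degree_lt (degree_resolventPoly_lt A w _), coeff_sub, coeff_C_mul, hlead,
      mul_one, ← Nat.sub_add_cancel (Fintype.card_pos (α := ι)), coeff_X_mul] at hcoeff
    exact sub_eq_zero.1 hcoeff.symm

variable {K : Type*} [Field K]

theorem IsCyclicVector.resolventPoly_injective {A : Matrix ι ι K} {w : ι → K}
    (hw : IsCyclicVector Aᵀ w) : Function.Injective (resolventPoly A w) := by
  refine (injective_iff_map_eq_zero _).2 fun y hy => ?_
  have hdot {z : ι → K} (hz : resolventPoly A w z = 0) : w ⬝ᵥ z = 0 := by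
    rw [← coeff_resolventPoly A w z, hz, coeff_zero]
  let W : Submodule K (ι → K) :=
    { carrier := {x | ∀ z, resolventPoly A w z = 0 → x ⬝ᵥ z = 0}
      add_mem' := fun hx hx' z hz => by rw [add_dotProduct, hx z hz, hx' z hz, add_zero]
      zero_mem' := fun z _ => zero_dotProduct z
      smul_mem' := fun c x hx z hz => by rw [smul_dotProduct, hx z hz, smul_zero] }
  have hW : W = ⊤ := by
    refine hw W (fun z hz => hdot hz) fun x hx z hz => ?_
    rw [mulVec_transpose, ← dotProduct_mulVec]
    refine hx _ ?_
    rw [resolventPoly_mulVec, hz, hdot hz, mul_zero, C_0, zero_mul, sub_zero]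
  refine dotProduct_eq_zero y fun x => ?_
  rw [dotProduct_comm]
  exact (hW ▸ Submodule.mem_top : x ∈ W) y hy

/-- The isomorphism `y ↦ resolventPoly A w y` onto the polynomials of degree less than the size of
`A`, for a cyclic vector `w` of `Aᵀ`. -/
def IsCyclicVector.resolventEquiv {A : Matrix ι ι K} {w : ι → K} (hw : IsCyclicVector Aᵀ w) :
    (ι → K) ≃ₗ[K] degreeLT K (Fintype.card ι) :=
  LinearMap.linearEquivOfInjective
    ((resolventPoly A w).codRestrict _ fun y => mem_degreeLT.2 (degree_resolventPoly_lt A w y))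
    (fun _ _ h => hw.resolventPoly_injective (congrArg Subtype.val h))
    (by simp [(degreeLTEquiv K (Fintype.card ι)).finrank_eq])

@[simp]
theorem IsCyclicVector.coe_resolventEquiv {A : Matrix ι ι K} {w : ι → K}
    (hw : IsCyclicVector Aᵀ w) (y : ι → K) :
    (hw.resolventEquiv y : K[X]) = resolventPoly A w y :=
  rfl

theorem IsCyclicVector.exists_resolventPoly_eq {A : Matrix ι ι K} {w : ι → K}
    (hw : IsCyclicVector Aᵀ w) {p : K[X]} (hp : p.degree < Fintype.card ι) :
    ∃ y, resolventPoly A w y = p :=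
  ⟨hw.resolventEquiv.symm ⟨p, mem_degreeLT.2 hp⟩, by rw [← hw.coe_resolventEquiv]; simp⟩

theorem isConj_of_isCyclicVector {A B : Matrix ι ι K} {v w : ι → K} (hA : IsCyclicVector A v)
    (hB : IsCyclicVector B w) (hAB : A.charpoly = B.charpoly) : IsConj A B := by
  rw [← A.transpose_transpose] at hA
  rw [← B.transpose_transpose] at hB
  let e := hA.resolventEquiv.trans hB.resolventEquiv.symm
  have he (y : ι → K) : resolventPoly Bᵀ w (e y) = resolventPoly Aᵀ v y := by
    rw [← hB.coe_resolventEquiv]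
    simp [e]
  have hcomm (y : ι → K) : e (Aᵀ *ᵥ y) = Bᵀ *ᵥ e y := by
    refine hB.resolventPoly_injective ?_
    rw [he, resolventPoly_mulVec, resolventPoly_mulVec, he, charpoly_transpose, charpoly_transpose,
      hAB, ← coeff_resolventPoly Aᵀ, ← coeff_resolventPoly Bᵀ, he]
  have hunit : IsUnit (LinearMap.toMatrixAlgEquiv' e.toLinearMap) :=
    (LinearMap.GeneralLinearGroup.ofLinearEquiv e).isUnit.map LinearMap.toMatrixAlgEquiv'
  have hmul : LinearMap.toMatrixAlgEquiv' e.toLinearMap * Aᵀ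
      = Bᵀ * LinearMap.toMatrixAlgEquiv' e.toLinearMap := by
    refine Matrix.ext_of_mulVec_single fun i => ?_
    rw [← mulVec_mulVec, ← mulVec_mulVec]
    exact (LinearMap.toMatrix'_mulVec _ _).trans
      ((hcomm _).trans (congrArg _ (LinearMap.toMatrix'_mulVec _ _).symm))
  refine IsConj.symm ⟨((isUnit_transpose _).2 hunit).unit, ?_⟩
  simpa [SemiconjBy] using (congrArg transpose hmul).symm

end ResolventPoly

section Completion

variable {ι κ R K : Type*} [Fintype ι] [DecidableEq ι] [Fintype κ] [DecidableEq κ] [CommRing R]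
  [Field K]

theorem charpoly_mul_one_add_vecMulVec (A : Matrix ι ι R) {y w : ι → R} (hwy : w ⬝ᵥ y = 0) :
    (A * (1 + vecMulVec y w)).charpoly = A.charpoly - X * resolventPoly A w y := by
  rw [mul_add, mul_one, mul_vecMulVec, charpoly_add_vecMulVec, resolventPoly_mulVec, hwy, C_0,
    zero_mul, sub_zero]

theorem adjugate_fromBlocks_zero₂₁_mulVec {A : Matrix ι ι R} {D : Matrix κ κ R}
    (hA : IsRegular A.det) (hD : IsRegular D.det) (B : Matrix ι κ R) (u : κ → R) :
    (fromBlocks A B 0 D).adjugate *ᵥ Sum.elim 0 u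
      = Sum.elim (-(A.adjugate *ᵥ B *ᵥ D.adjugate *ᵥ u)) (A.det • D.adjugate *ᵥ u) := by
  set M := fromBlocks A B 0 D with hM
  set x := Sum.elim (-(A.adjugate *ᵥ B *ᵥ D.adjugate *ᵥ u)) (A.det • D.adjugate *ᵥ u) with hx
  have hdet : M.det = A.det * D.det := det_fromBlocks_zero₂₁ ..
  have hreg : IsRegular M.det := hdet ▸ hA.mul hD
  have hsolve : M *ᵥ x = M.det • Sum.elim (0 : ι → R) u := by
    have hA' (y : ι → R) : A *ᵥ A.adjugate *ᵥ y = A.det • y := by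
      rw [mulVec_mulVec, mul_adjugate, smul_mulVec, one_mulVec]
    have hD' (z : κ → R) : D *ᵥ D.adjugate *ᵥ z = D.det • z := by
      rw [mulVec_mulVec, mul_adjugate, smul_mulVec, one_mulVec]
    rw [hdet, hM, hx, fromBlocks_mulVec, Sum.elim_comp_inl, Sum.elim_comp_inr, mulVec_neg, hA',
      mulVec_smul, neg_add_cancel, zero_mulVec, zero_add, mulVec_smul, hD', smul_smul]
    ext (i | i) <;> simp
  have hcancel := congrArg (M.adjugate *ᵥ ·) hsolve
  simp only [mulVec_mulVec, adjugate_mul, smul_mulVec, one_mulVec, mulVec_smul] at hcancel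
  exact funext fun i => hreg.left (congrFun hcancel i).symm

theorem resolventPoly_fromBlocks_zero₂₁ (P : Matrix ι ι R) (Z : Matrix ι κ R) (Q : Matrix κ κ R)
    (w : ι → R) (u : κ → R) :
    resolventPoly (fromBlocks P Z 0 Q) (Sum.elim w 0) (Sum.elim 0 u)
      = (C ∘ w) ⬝ᵥ P.charmatrix.adjugate *ᵥ Z.map C *ᵥ Q.charmatrix.adjugate *ᵥ (C ∘ u) := by
  have hzero : -(0 : Matrix κ ι R).map (C : R →+* R[X]) = 0 := by simp
  rw [resolventPoly_apply, Sum.comp_elim, Sum.comp_elim, charmatrix_fromBlocks, hzero,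
    show (C ∘ 0 : ι → R[X]) = 0 from funext fun _ => C_0,
    show (C ∘ 0 : κ → R[X]) = 0 from funext fun _ => C_0,
    adjugate_fromBlocks_zero₂₁_mulVec P.charpoly_monic.isRegular Q.charpoly_monic.isRegular,
    sumElim_dotProduct_sumElim, zero_dotProduct, add_zero, neg_mulVec, mulVec_neg, neg_neg]

theorem resolventPoly_fromBlocks_vecMulVec (P : Matrix ι ι R) (Q : Matrix κ κ R) (w y : ι → R)
    (φ u : κ → R) :
    resolventPoly (fromBlocks P (vecMulVec y φ) 0 Q) (Sum.elim w 0) (Sum.elim 0 u)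
      = resolventPoly P w y * resolventPoly Q φ u := by
  have hmap : (vecMulVec y φ).map (C : R → R[X]) = vecMulVec (C ∘ y) (C ∘ φ) := by
    ext i j : 2
    simp [vecMulVec_apply]
  rw [resolventPoly_fromBlocks_zero₂₁, hmap, vecMulVec_mulVec, mulVec_smul, dotProduct_smul,
    ← resolventPoly_apply, ← resolventPoly_apply, op_smul_eq_mul]

theorem exists_resolventPoly_fromBlocks_eq [Nonempty ι] [Nonempty κ] {P : Matrix ι ι K}
    {Q : Matrix κ κ K} {w : ι → K} {u : κ → K} (hw : IsCyclicVector Pᵀ w)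
    (hu : IsCyclicVector Q u) {q : K[X]}
    (hq : q.degree < (Fintype.card ι + Fintype.card κ - 1 : ℕ)) :
    ∃ Z, resolventPoly (fromBlocks P Z 0 Q) (Sum.elim w 0) (Sum.elim 0 u) = q := by
  classical
  have hι := Fintype.card_pos (α := ι)
  have hκ := Fintype.card_pos (α := κ)
  rw [← mem_degreeLT, degreeLT_eq_span_X_pow] at hq
  induction hq using Submodule.span_induction with
  | mem q hq =>
    obtain ⟨k, hk, rfl⟩ := Finset.mem_image.1 hq
    rw [Finset.mem_range] at hk
    obtain ⟨i, j, hi, hj, rfl⟩ :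
        ∃ i j, i < Fintype.card ι ∧ j < Fintype.card κ ∧ k = i + j :=
      ⟨min k (Fintype.card ι - 1), k - min k (Fintype.card ι - 1), by lia, by lia, by lia⟩
    rw [← Q.transpose_transpose] at hu
    obtain ⟨y, hy⟩ := hw.exists_resolventPoly_eq (p := X ^ i) (by simpa [degree_X_pow] using hi)
    obtain ⟨φ, hφ⟩ := hu.exists_resolventPoly_eq (p := X ^ j) (by simpa [degree_X_pow] using hj)
    rw [resolventPoly_transpose] at hφ
    exact ⟨vecMulVec y φ, by rw [resolventPoly_fromBlocks_vecMulVec, hy, hφ, pow_add]⟩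
  | zero => exact ⟨0, by simp [resolventPoly_fromBlocks_zero₂₁]⟩
  | add p q _ _ hp hq =>
    obtain ⟨Z, rfl⟩ := hp
    obtain ⟨Z', rfl⟩ := hq
    refine ⟨Z + Z', ?_⟩
    simp only [resolventPoly_fromBlocks_zero₂₁, Matrix.map_add C fun _ _ => C_add, add_mulVec,
      mulVec_add, dotProduct_add]
  | smul a q _ hq =>
    obtain ⟨Z, rfl⟩ := hq
    refine ⟨a • Z, ?_⟩
    have hmap : (a • Z).map C = C a • Z.map C := by ext i j : 2; simp
    simp only [resolventPoly_fromBlocks_zero₂₁, hmap, smul_mulVec, mulVec_smul, dotProduct_smul,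
      smul_eq_C_mul, smul_eq_mul]

/-- The transvection `[[1, 0], [u wᵀ, 1]]`, by which a block upper triangular matrix is multiplied
to make it cyclic with a prescribed characteristic polynomial. -/
def cornerTransvection (u : κ → R) (w : ι → R) : Matrix (ι ⊕ κ) (ι ⊕ κ) R :=
  fromBlocks 1 0 (vecMulVec u w) 1

omit [Fintype ι] [Fintype κ] in
theorem cornerTransvection_eq_one_add_vecMulVec (u : κ → R) (w : ι → R) :
    cornerTransvection u w = 1 + vecMulVec (Sum.elim 0 u) (Sum.elim w 0) := by
  ext (i | i) (j | j) <;> simp [cornerTransvection, vecMulVec_apply, one_apply]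

theorem cornerTransvection_mul_neg (u : κ → R) (w : ι → R) :
    cornerTransvection u w * cornerTransvection (-u) w = 1 := by
  simp [cornerTransvection, fromBlocks_multiply, neg_vecMulVec]

theorem charpoly_fromBlocks_mul_cornerTransvection (P : Matrix ι ι R) (Z : Matrix ι κ R)
    (Q : Matrix κ κ R) (u : κ → R) (w : ι → R) :
    (fromBlocks P Z 0 Q * cornerTransvection u w).charpoly = P.charpoly * Q.charpoly
      - X * resolventPoly (fromBlocks P Z 0 Q) (Sum.elim w 0) (Sum.elim 0 u) := by
  rw [cornerTransvection_eq_one_add_vecMulVec, charpoly_mul_one_add_vecMulVec _ (by simp),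
    charpoly_fromBlocks_zero₂₁]

theorem fromBlocks_mul_cornerTransvection_mulVec (P : Matrix ι ι R) (Z : Matrix ι κ R)
    (Q : Matrix κ κ R) (u : κ → R) (w : ι → R) (y : ι → R) (z : κ → R) :
    (fromBlocks P Z 0 Q * cornerTransvection u w) *ᵥ Sum.elim y z
      = Sum.elim (P *ᵥ y + Z *ᵥ ((w ⬝ᵥ y) • u + z)) (Q *ᵥ ((w ⬝ᵥ y) • u + z)) := by
  rw [← mulVec_mulVec, cornerTransvection, fromBlocks_mulVec, fromBlocks_mulVec]
  simp [vecMulVec_mulVec]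

theorem IsCyclicVector.eq_top_of_resolventPoly_eq_one {P : Matrix ι ι K} {w x : ι → K}
    (hw : IsCyclicVector Pᵀ w) (hx : resolventPoly P w x = 1) {W : Submodule K (ι → K)}
    (hxW : x ∈ W) (hW : ∀ y ∈ W, w ⬝ᵥ y = 0 → P *ᵥ y ∈ W) : W = ⊤ := by
  classical
  have hpow : ∀ k < Fintype.card ι, X ^ k ∈ W.map (resolventPoly P w) := by
    intro k
    induction k with
    | zero => exact fun _ => ⟨x, hxW, by rw [hx, pow_zero]⟩
    | succ k ih =>
      intro hk
      obtain ⟨y, hyW, hy⟩ := ih (by lia)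
      have hwy : w ⬝ᵥ y = 0 := by
        rw [← coeff_resolventPoly P, hy, coeff_X_pow, if_neg (by lia)]
      exact ⟨P *ᵥ y, hW y hyW hwy, by
        rw [resolventPoly_mulVec, hy, hwy, C_0, zero_mul, sub_zero, pow_succ']⟩
  have hle : degreeLT K (Fintype.card ι) ≤ W.map (resolventPoly P w) := by
    rw [degreeLT_eq_span_X_pow, Submodule.span_le]
    intro p hp
    obtain ⟨k, hk, rfl⟩ := Finset.mem_image.1 hp
    exact hpow k (Finset.mem_range.1 hk)
  refine eq_top_iff.2 fun y _ => ?_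
  obtain ⟨y', hy', h⟩ := hle (mem_degreeLT.2 (degree_resolventPoly_lt P w y))
  exact hw.resolventPoly_injective h ▸ hy'

theorem sumElim_zero_mem_of_mulVec_mem {P : Matrix ι ι K} {Z : Matrix ι κ K} {Q : Matrix κ κ K}
    {w x : ι → K} {u : κ → K} (hw : IsCyclicVector Pᵀ w) (hx : resolventPoly P w x = 1)
    {W : Submodule K (ι ⊕ κ → K)} (hxW : Sum.elim x 0 ∈ W)
    (hW : ∀ v ∈ W, (fromBlocks P Z 0 Q * cornerTransvection u w) *ᵥ v ∈ W) (y : ι → K) :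
    Sum.elim y 0 ∈ W := by
  let inl : (ι → K) →ₗ[K] ι ⊕ κ → K :=
    (LinearEquiv.sumArrowLequivProdArrow ι κ K K).symm.toLinearMap ∘ₗ LinearMap.inl K _ _
  have htop : W.comap inl = ⊤ := by
    refine hw.eq_top_of_resolventPoly_eq_one hx hxW fun z hz hwz => ?_
    have hNz := hW (Sum.elim z 0) hz
    rw [fromBlocks_mul_cornerTransvection_mulVec, hwz, zero_smul, zero_add, mulVec_zero,
      mulVec_zero, add_zero] at hNz
    exact hNz
  exact (htop ▸ Submodule.mem_top : y ∈ W.comap inl)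

theorem exists_isCyclicVector_fromBlocks_mul_cornerTransvection [Nonempty ι] {P : Matrix ι ι K}
    {Q : Matrix κ κ K} {w : ι → K} {u : κ → K} (hw : IsCyclicVector Pᵀ w)
    (hu : IsCyclicVector Q u) (hQ : IsUnit Q) (Z : Matrix ι κ K) :
    ∃ v, IsCyclicVector (fromBlocks P Z 0 Q * cornerTransvection u w) v := by
  have hι : 0 < Fintype.card ι := Fintype.card_pos
  obtain ⟨x, hx⟩ := hw.exists_resolventPoly_eq (p := 1) (by rw [degree_one]; exact_mod_cast hι)
  obtain ⟨y, hy⟩ := hw.exists_resolventPoly_eq (p := X ^ (Fintype.card ι - 1)) (by simp [hι])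
  have hwy : w ⬝ᵥ y = 1 := by rw [← coeff_resolventPoly P, hy, coeff_X_pow_self]
  refine ⟨Sum.elim x 0, fun W hxW hW => ?_⟩
  have hleft := sumElim_zero_mem_of_mulVec_mem hw hx hxW hW
  have hright_of {a : ι → K} {z : κ → K} (h : Sum.elim a z ∈ W) :
      Sum.elim (0 : ι → K) z ∈ W := by
    have := W.sub_mem h (hleft a)
    rwa [← Sum.elim_sub_sub, sub_self, sub_zero] at this
  let inrQ : (κ → K) →ₗ[K] ι ⊕ κ → K :=
    (LinearEquiv.sumArrowLequivProdArrow ι κ K K).symm.toLinearMap ∘ₗ LinearMap.inr K _ _ ∘ₗ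
      Q.mulVecLin
  have htop : W.comap inrQ = ⊤ := by
    refine hu _ ?_ fun z hz => ?_
    · have hNy := hW _ (hleft y)
      rw [fromBlocks_mul_cornerTransvection_mulVec, hwy, one_smul, add_zero] at hNy
      exact hright_of hNy
    · have hNz := hW (Sum.elim 0 (Q *ᵥ z)) hz
      rw [fromBlocks_mul_cornerTransvection_mulVec, dotProduct_zero, zero_smul, zero_add] at hNz
      exact hright_of hNz
  refine eq_top_iff.2 fun v _ => ?_
  obtain ⟨z, hz⟩ := mulVec_surjective_iff_isUnit.2 hQ (v ∘ Sum.inr)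
  have hzW : Sum.elim (0 : ι → K) (Q *ᵥ z) ∈ W :=
    (htop ▸ Submodule.mem_top : z ∈ W.comap inrQ)
  have := W.add_mem (hleft (v ∘ Sum.inl)) hzW
  rwa [← Sum.elim_add_add, add_zero, zero_add, hz, Sum.elim_comp_inl_inr] at this

theorem coeff_zero_charpoly (A : Matrix ι ι R) :
    A.charpoly.coeff 0 = (-1) ^ Fintype.card ι * A.det := by
  rw [A.det_eq_sign_charpoly_coeff, ← mul_assoc, ← mul_pow, neg_one_mul, neg_neg, one_pow, one_mul]

theorem exists_charpoly_sub_eq_X_mul [Nonempty ι] {A B : Matrix ι ι K} (h : A.det = B.det) :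
    ∃ q : K[X], q.degree < (Fintype.card ι - 1 : ℕ) ∧ A.charpoly - B.charpoly = X * q := by
  obtain ⟨q, hq⟩ : X ∣ A.charpoly - B.charpoly := by
    rw [X_dvd_iff, coeff_sub, coeff_zero_charpoly, coeff_zero_charpoly, h, sub_self]
  refine ⟨q, ?_, hq⟩
  have hlt : (A.charpoly - B.charpoly).degree < Fintype.card ι := by
    rw [← A.charpoly_degree_eq_dim]
    refine degree_sub_lt_left ?_ A.charpoly_monic.ne_zero ?_
    · simp only [charpoly_degree_eq_dim]
    · simp only [A.charpoly_monic.leadingCoeff, B.charpoly_monic.leadingCoeff]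
  rw [hq, X_mul, ← Nat.sub_add_cancel (Fintype.card_pos (α := ι)), degree_mul_X, Nat.cast_add,
    Nat.cast_one] at hlt
  exact lt_of_add_lt_add_right hlt

theorem IsCyclicMat.exists_isConj_fromBlocks_mul_cornerTransvection [Nonempty ι] [Nonempty κ]
    {A : Matrix (ι ⊕ κ) (ι ⊕ κ) K} (hA : IsCyclicMat A) {P : Matrix ι ι K} {Q : Matrix κ κ K}
    {w : ι → K} {u : κ → K} (hw : IsCyclicVector Pᵀ w) (hu : IsCyclicVector Q u) (hQ : IsUnit Q)
    (hdet : A.det = P.det * Q.det) :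
    ∃ Z, IsConj A (fromBlocks P Z 0 Q * cornerTransvection u w) := by
  obtain ⟨q, hqdeg, hq⟩ := exists_charpoly_sub_eq_X_mul (A := fromBlocks P 0 0 Q) (B := A)
    (by rw [det_fromBlocks_zero₂₁, hdet])
  rw [Fintype.card_sum] at hqdeg
  obtain ⟨Z, hZ⟩ := exists_resolventPoly_fromBlocks_eq hw hu hqdeg
  obtain ⟨a, ha⟩ := hA.exists_isCyclicVector
  obtain ⟨v, hv⟩ := exists_isCyclicVector_fromBlocks_mul_cornerTransvection hw hu hQ Z
  refine ⟨Z, isConj_of_isCyclicVector ha hv ?_⟩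
  rw [charpoly_fromBlocks_mul_cornerTransvection, hZ, ← hq, charpoly_fromBlocks_zero₂₁,
    sub_sub_cancel]

end Completion

section TriangularFactorization

variable {ι κ R K : Type*} [Fintype ι] [DecidableEq ι] [Fintype κ] [DecidableEq κ] [CommRing R]
  [Field K]

theorem isConj_iff_exists_isUnit {A B : Matrix ι ι R} :
    IsConj A B ↔ ∃ S : Matrix ι ι R, IsUnit S ∧ B = S * A * S⁻¹ := by
  constructor
  · rintro ⟨S, hS⟩
    refine ⟨S, S.isUnit, ?_⟩
    rw [← coe_units_inv, Units.eq_mul_inv_iff_mul_eq]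
    exact hS.symm
  · rintro ⟨_, ⟨S, rfl⟩, rfl⟩
    rw [← coe_units_inv]
    exact ⟨S, S.mk_semiconjBy A⟩

theorem det_eq_of_isConj {A B : Matrix ι ι R} (h : IsConj A B) : A.det = B.det :=
  isConj_iff_eq.1 (detMonoidHom.map_isConj h)

theorem isConj_reindex {A B : Matrix ι ι R} (h : IsConj A B) (e : ι ≃ κ) :
    IsConj (reindex e e A) (reindex e e B) :=
  MonoidHom.map_isConj (reindexAlgEquiv R R e : Matrix ι ι R →* Matrix κ κ R) h

theorem exists_isConj_apply_self_ne_zero {N : Matrix ι ι K} (hN : N.det ≠ 0) (i : ι) :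
    ∃ N', IsConj N N' ∧ N' i i ≠ 0 := by
  by_cases hii : N i i = 0
  · obtain ⟨j, hj⟩ : ∃ j, N j i ≠ 0 := by
      by_contra! hcol
      exact hN (det_eq_zero_of_column_eq_zero i hcol)
    have hij : i ≠ j := by
      rintro rfl
      exact hj hii
    have hunit : IsUnit (transvection i j (1 : K)) := by
      simp [isUnit_iff_isUnit_det, det_transvection_of_ne i j hij]
    have hinv : (transvection i j (1 : K))⁻¹ = transvection i j (-1) := by
      refine inv_eq_left_inv ?_
      rw [transvection_mul_transvection_same i j hij, neg_add_cancel, transvection_zero]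
    refine ⟨_, isConj_iff_exists_isUnit.2 ⟨transvection i j 1, hunit, rfl⟩, ?_⟩
    rw [hinv, mul_transvection_apply_of_ne _ _ _ _ hij, transvection_mul_apply_same, hii]
    simpa using hj
  · exact ⟨N, IsConj.refl N, hii⟩

theorem exists_isConj_fromBlocks_eq_mul {A : Matrix ι ι R} (hA : IsUnit A) (B : Matrix ι κ R)
    (C : Matrix κ ι R) {D L U : Matrix κ κ R} (hLU : IsConj (D - C * A⁻¹ * B) (L * U)) :
    ∃ B' C', IsConj (fromBlocks A B C D) (fromBlocks 1 0 C' L * fromBlocks A B' 0 U) := by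
  obtain ⟨S, hS, hLU⟩ := isConj_iff_exists_isUnit.1 hLU
  have hAdet := (isUnit_iff_isUnit_det A).1 hA
  have hSdet := (isUnit_iff_isUnit_det S).1 hS
  have hunit : IsUnit (fromBlocks (1 : Matrix ι ι R) 0 0 S) :=
    isUnit_fromBlocks_zero₂₁.2 ⟨isUnit_one, hS⟩
  refine ⟨B * S⁻¹, S * C * A⁻¹, hunit.unit, ?_⟩
  have hDiag : S * C * A⁻¹ * (B * S⁻¹) + L * U = S * D * S⁻¹ := by
    rw [hLU, Matrix.mul_sub, Matrix.sub_mul]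
    simp only [Matrix.mul_assoc, add_sub_cancel]
  rw [SemiconjBy, IsUnit.unit_spec]
  simp only [fromBlocks_multiply, Matrix.one_mul, Matrix.mul_one, Matrix.zero_mul, Matrix.mul_zero,
    add_zero, zero_add, hDiag, nonsing_inv_mul_cancel_right _ _ hAdet,
    nonsing_inv_mul_cancel_right _ _ hSdet]

/-- The splitting of `Fin (s + 1)` into its first element and the rest, used to view a matrix as a
block matrix whose upper left block is its first entry. -/
def unitSumFinEquiv (s : ℕ) : Unit ⊕ Fin s ≃ Fin (s + 1) :=
  (Equiv.sumComm ..).trans ((Equiv.optionEquivSumPUnit _).symm.trans (finSuccEquiv s).symm)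

@[simp]
theorem unitSumFinEquiv_symm_zero (s : ℕ) : (unitSumFinEquiv s).symm 0 = Sum.inl () := rfl

@[simp]
theorem unitSumFinEquiv_symm_succ {s : ℕ} (i : Fin s) :
    (unitSumFinEquiv s).symm i.succ = Sum.inr i := rfl

theorem isUpperTriangular_reindex_fromBlocks {s : ℕ} (A : Matrix Unit Unit R)
    (B : Matrix Unit (Fin s) R) {U : Matrix (Fin s) (Fin s) R} (hU : U.IsUpperTriangular) :
    (reindex (unitSumFinEquiv s) (unitSumFinEquiv s) (fromBlocks A B 0 U)).IsUpperTriangular := by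
  intro i j hij
  cases i using Fin.cases with
  | zero => exact absurd hij (Fin.not_lt_zero j)
  | succ i =>
    cases j using Fin.cases with
    | zero => simp
    | succ j => simpa using hU (Fin.succ_lt_succ_iff.1 hij)

theorem isLowerTriangular_reindex_fromBlocks {s : ℕ} (A : Matrix Unit Unit R)
    (C : Matrix (Fin s) Unit R) {L : Matrix (Fin s) (Fin s) R} (hL : L.IsLowerTriangular) :
    (reindex (unitSumFinEquiv s) (unitSumFinEquiv s) (fromBlocks A 0 C L)).IsLowerTriangular := by
  have := (isUpperTriangular_reindex_fromBlocks Aᵀ Cᵀ (U := Lᵀ) hL.transpose).transpose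
  rwa [← transpose_zero, ← fromBlocks_transpose, transpose_reindex, transpose_transpose] at this

theorem exists_isLowerTriangular_isConj_mul {s : ℕ} {N : Matrix (Fin s) (Fin s) K}
    (hN : N.det ≠ 0) :
    ∃ L U, L.IsLowerTriangular ∧ U.IsUpperTriangular ∧ IsConj N (L * U) := by
  induction s with
  | zero => exact ⟨1, N, blockTriangular_one, fun i => i.elim0, by rw [one_mul]⟩
  | succ s ih =>
    obtain ⟨N', hNN', hpivot⟩ := exists_isConj_apply_self_ne_zero hN 0
    let e := unitSumFinEquiv s
    obtain ⟨A, B, C, D, rfl⟩ : ∃ A B C D, N' = reindex e e (fromBlocks A B C D) :=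
      ⟨_, _, _, _, by rw [fromBlocks_toBlocks, ← Equiv.symm_apply_eq (reindex e e)]⟩
    have hA : IsUnit A := by
      rw [isUnit_iff_isUnit_det, det_unique, isUnit_iff_ne_zero]
      exact hpivot
    have hSchur : (D - C * A⁻¹ * B).det ≠ 0 := by
      have := A.invertibleOfIsUnitDet ((isUnit_iff_isUnit_det A).1 hA)
      rw [det_eq_of_isConj hNN', det_reindex_self, det_fromBlocks₁₁, invOf_eq_nonsing_inv] at hN
      exact right_ne_zero_of_mul hN
    obtain ⟨L, U, hL, hU, hLU⟩ := ih hSchur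
    obtain ⟨B', C', hconj⟩ := exists_isConj_fromBlocks_eq_mul hA B C hLU
    refine ⟨reindex e e (fromBlocks 1 0 C' L), reindex e e (fromBlocks A B' 0 U),
      isLowerTriangular_reindex_fromBlocks 1 C' hL, isUpperTriangular_reindex_fromBlocks A B' hU,
      ?_⟩
    rw [reindex_apply, reindex_apply, submatrix_mul_equiv, ← reindex_apply]
    exact hNN'.trans (isConj_reindex hconj e)

end TriangularFactorization

section CommonCyclicVector

variable {ι K : Type*} [Fintype ι] [DecidableEq ι] [Field K]

omit [Fintype ι] in
theorem single_one_mem_of_mem [Finite ι] {W : Submodule K (ι → K)} {x : ι → K} (hx : x ∈ W)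
    {i : ι} (hi : x i ≠ 0) (hW : ∀ j, j ≠ i → x j ≠ 0 → Pi.single j 1 ∈ W) :
    Pi.single i 1 ∈ W := by
  have := Fintype.ofFinite ι
  have hrest : ∑ j ∈ Finset.univ.erase i, x j • (Pi.single j 1 : ι → K) ∈ W := by
    refine W.sum_mem fun j hj => ?_
    by_cases hxj : x j = 0
    · rw [hxj, zero_smul]
      exact W.zero_mem
    · exact W.smul_mem _ (hW j (Finset.ne_of_mem_erase hj) hxj)
  have hlead : x i • (Pi.single i 1 : ι → K) ∈ W := by
    rw [← W.add_mem_iff_left hrest,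
      Finset.add_sum_erase _ (fun j => x j • (Pi.single j 1 : ι → K)) (Finset.mem_univ i),
      ← pi_eq_sum_univ' x]
    exact hx
  exact (W.smul_mem_iff hi).1 hlead

theorem isCyclicVector_single_of_hessenberg {s : ℕ} {A : Matrix ι ι K} (τ : Fin (s + 1) ≃ ι)
    (hsub : ∀ k : Fin s, A (τ k.succ) (τ k.castSucc) ≠ 0)
    (hzero : ∀ (k : Fin s) (i : Fin (s + 1)), k.succ < i → A (τ i) (τ k.castSucc) = 0) :
    IsCyclicVector A (Pi.single (τ 0) 1) := by
  intro W h0 hW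
  have hmem (k : Fin (s + 1)) : ∀ j ≤ k, (Pi.single (τ j) 1 : ι → K) ∈ W := by
    induction k using Fin.induction with
    | zero =>
      intro j hj
      rwa [Fin.le_zero_iff.1 hj]
    | succ k ih =>
      have hcol : A.col (τ k.castSucc) ∈ W := by
        simpa only [mulVec_single_one] using hW _ (ih _ le_rfl)
      have hlt (j : Fin (s + 1)) (hj : j < k.succ) : (Pi.single (τ j) 1 : ι → K) ∈ W :=
        ih j (Fin.le_castSucc_iff.2 hj)
      intro j hj
      obtain rfl | hj := eq_or_lt_of_le hj
      · refine single_one_mem_of_mem hcol (hsub k) fun i hi hAi => ?_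
        obtain ⟨i, rfl⟩ := τ.surjective i
        have hle : i ≤ k.succ := not_lt.1 fun hgt => hAi (hzero k i hgt)
        exact hlt i (lt_of_le_of_ne hle (ne_of_apply_ne τ hi))
      · exact hlt j hj
  refine eq_top_iff.2 ((Pi.basisFun K ι).span_eq.symm.trans_le (Submodule.span_le.2 ?_))
  rintro _ ⟨i, rfl⟩
  simpa using hmem _ (τ.symm i) le_rfl

theorem isCyclicVector_submatrix_of_isUpperTriangular {s : ℕ}
    {U : Matrix (Fin (s + 1)) (Fin (s + 1)) K} (hU : U.IsUpperTriangular) (hdet : U.det ≠ 0) :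
    IsCyclicVector (U.submatrix (Equiv.subRight 1) id) (Pi.single 0 1) := by
  rw [det_of_isUpperTriangular hU, Finset.prod_ne_zero_iff] at hdet
  refine isCyclicVector_single_of_hessenberg (Equiv.refl _) (fun k => ?_) fun k i hki => ?_
  · simpa [← Fin.coeSucc_eq_succ] using hdet k.castSucc (Finset.mem_univ _)
  · refine hU (show k.castSucc < i - 1 from ?_)
    rw [Fin.lt_def, Fin.val_sub_one_of_ne_zero (Fin.ne_zero_of_lt hki)]
    simp only [Fin.lt_def, Fin.val_succ, Fin.val_castSucc] at hki ⊢
    lia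

theorem isCyclicVector_submatrix_of_isLowerTriangular {s : ℕ}
    {L : Matrix (Fin (s + 1)) (Fin (s + 1)) K} (hL : L.IsLowerTriangular) (hdet : L.det ≠ 0) :
    IsCyclicVector (L.submatrix id (Equiv.subRight 1)) (Pi.single 0 1) := by
  rw [det_of_isLowerTriangular L hL, Finset.prod_ne_zero_iff] at hdet
  have hcol (k : Fin s) : -k.castSucc - 1 = -k.succ := by
    rw [← Fin.coeSucc_eq_succ, neg_add']
  rw [← neg_zero (G := Fin (s + 1))]
  refine isCyclicVector_single_of_hessenberg (Equiv.neg _) (fun k => ?_) fun k i hki => ?_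
  · simpa [hcol] using hdet (-k.succ) (Finset.mem_univ _)
  · have hlt : -i < -k.succ := by
      rw [Fin.lt_def] at hki ⊢
      rw [Fin.val_neg, Fin.val_neg, if_neg (Fin.ne_zero_of_lt hki), if_neg (Fin.succ_ne_zero k)]
      lia
    change L (-i) (-k.castSucc - 1) = 0
    rw [hcol]
    exact hL hlt

theorem exists_isLowerTriangular_det_eq_isConj_mul {s : ℕ}
    {N : Matrix (Fin (s + 1)) (Fin (s + 1)) K} (hN : N.det ≠ 0) {d : K} (hd : d ≠ 0) :
    ∃ L U, L.IsLowerTriangular ∧ U.IsUpperTriangular ∧ L.det = d ∧ IsConj N (L * U) := by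
  obtain ⟨L, U, hL, hU, hconj⟩ := exists_isLowerTriangular_isConj_mul hN
  rw [det_eq_of_isConj hconj, det_mul] at hN
  have hLdet : L.det ≠ 0 := left_ne_zero_of_mul hN
  let D : Matrix (Fin (s + 1)) (Fin (s + 1)) K := diagonal (Pi.mulSingle 0 (d / L.det))
  have hD : D.det = d / L.det := by
    rw [det_diagonal, Finset.prod_pi_mulSingle', if_pos (Finset.mem_univ 0)]
  have hDunit : IsUnit D.det := hD ▸ isUnit_iff_ne_zero.2 (div_ne_zero hd hLdet)
  refine ⟨L * D, D⁻¹ * U, hL.mul (blockTriangular_diagonal _), ?_, ?_, ?_⟩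
  · rw [inv_diagonal]
    exact (blockTriangular_diagonal _).mul hU
  · rw [det_mul, hD, mul_div_cancel₀ _ hLdet]
  · rwa [← Matrix.mul_assoc, mul_nonsing_inv_cancel_right _ _ hDunit]

theorem exists_eq_mul_isCyclicVector {s : ℕ} {N : Matrix (Fin (s + 1)) (Fin (s + 1)) K}
    (hN : N.det ≠ 0) {d : K} (hd : d ≠ 0) :
    ∃ R C u, N = R * C ∧ R.det = d ∧ IsCyclicVector R u ∧ IsCyclicVector C u := by
  -- The cyclic shift `σ` put between the triangular factors of `N` makes both of them Hessenberg
  -- with nonzero subdiagonal, in the orders `0, -1, …, -s` and `0, 1, …, s` of the indices.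
  let σ : Equiv.Perm (Fin (s + 1)) := Equiv.subRight 1
  have hσ : ((σ.sign : ℤ) : K) * ((σ.sign : ℤ) : K) = 1 := by
    rw [← Int.cast_mul, Int.units_coe_mul_self, Int.cast_one]
  obtain ⟨L, U, hL, hU, hLdet, hconj⟩ := exists_isLowerTriangular_det_eq_isConj_mul hN
    (mul_ne_zero (left_ne_zero_of_mul_eq_one hσ) hd)
  have hLU : L.det * U.det ≠ 0 := by rwa [← det_mul, ← det_eq_of_isConj hconj]
  obtain ⟨S, hS, rfl⟩ := isConj_iff_exists_isUnit.1 hconj.symm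
  have hSdet := (isUnit_iff_isUnit_det S).1 hS
  refine ⟨S * L.submatrix id σ * S⁻¹, S * U.submatrix σ id * S⁻¹, S *ᵥ Pi.single 0 1, ?_, ?_,
    (isCyclicVector_submatrix_of_isLowerTriangular hL (left_ne_zero_of_mul hLU)).conj hS,
    (isCyclicVector_submatrix_of_isUpperTriangular hU (right_ne_zero_of_mul hLU)).conj hS⟩
  · calc S * (L * U) * S⁻¹ = S * (L.submatrix id σ * U.submatrix σ id) * S⁻¹ := by
          rw [submatrix_mul_equiv, submatrix_id_id]
      _ = S * L.submatrix id σ * S⁻¹ * (S * U.submatrix σ id * S⁻¹) := by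
          simp only [Matrix.mul_assoc, nonsing_inv_mul_cancel_left _ _ hSdet]
  · rw [det_conj hS, det_permute', hLdet, ← mul_assoc, hσ, one_mul]

end CommonCyclicVector

section BlockDecomposition

variable {ι κ K V W : Type*} [Fintype ι] [DecidableEq ι] [Fintype κ] [DecidableEq κ] [Field K]
  [AddCommGroup V] [Module K V] [AddCommGroup W] [Module K W]

theorem comp_aeval_eq_aeval_comp {S : Module.End K V} {T : Module.End K W} {φ : V →ₗ[K] W}
    (hφ : φ ∘ₗ S = T ∘ₗ φ) (p : K[X]) : φ ∘ₗ aeval S p = aeval T p ∘ₗ φ := by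
  induction p using Polynomial.induction_on with
  | C a => ext; simp
  | add p q hp hq => rw [map_add, map_add, LinearMap.comp_add, LinearMap.add_comp, hp, hq]
  | monomial k a ih =>
    rw [pow_succ, ← mul_assoc, map_mul (aeval S), map_mul (aeval T), aeval_X, aeval_X,
      Module.End.mul_eq_comp, Module.End.mul_eq_comp, ← LinearMap.comp_assoc, ih,
      LinearMap.comp_assoc, hφ, LinearMap.comp_assoc]

theorem eq_zero_of_mul_eq_mul_of_isCoprime {M : Matrix ι ι K} {N : Matrix κ κ K} {f g : K[X]}
    (hfg : IsCoprime f g) (hf : aeval M f = 0) (hg : aeval N g = 0) {H : Matrix ι κ K}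
    (hH : M * H = H * N) : H = 0 := by
  have hcomm : toLin' H ∘ₗ toLin' N = toLin' M ∘ₗ toLin' H := by
    rw [← toLin'_mul, ← toLin'_mul, hH]
  have hHf : H * aeval N f = 0 := by
    apply toLin'.injective
    rw [toLin'_mul, ← aeval_toLin', comp_aeval_eq_aeval_comp hcomm, aeval_toLin', hf, map_zero,
      LinearMap.zero_comp, map_zero]
  obtain ⟨a, b, hab⟩ := hfg
  have hone : aeval N f * aeval N a = 1 := by
    rw [← map_mul, mul_comm, ← add_zero (aeval N (a * f)), ← mul_zero (aeval N b), ← hg, ← map_mul,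
      ← map_add, hab, map_one]
  rw [← Matrix.mul_one H, ← hone, ← Matrix.mul_assoc, hHf, Matrix.zero_mul]

theorem exists_mul_sub_mul_eq_of_isCoprime {M : Matrix ι ι K} {N : Matrix κ κ K} {f g : K[X]}
    (hfg : IsCoprime f g) (hf : aeval M f = 0) (hg : aeval N g = 0) (Z : Matrix ι κ K) :
    ∃ H : Matrix ι κ K, M * H - H * N = Z := by
  let Φ := mulLeftLinearMap κ K M - mulRightLinearMap ι K N
  have hΦ : Function.Injective Φ := (injective_iff_map_eq_zero Φ).2 fun H hH =>
    eq_zero_of_mul_eq_mul_of_isCoprime hfg hf hg (sub_eq_zero.1 hH)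
  exact LinearMap.injective_iff_surjective.1 hΦ Z

theorem isConj_fromBlocks_diagonal_of_isCoprime {M : Matrix ι ι K} {N : Matrix κ κ K} {f g : K[X]}
    (hfg : IsCoprime f g) (hf : aeval M f = 0) (hg : aeval N g = 0) (Z : Matrix ι κ K) :
    IsConj (fromBlocks M 0 0 N) (fromBlocks M Z 0 N) := by
  obtain ⟨H, rfl⟩ := exists_mul_sub_mul_eq_of_isCoprime hfg hf hg Z
  have hunit : IsUnit (fromBlocks 1 (-H) 0 (1 : Matrix κ κ K)) :=
    isUnit_fromBlocks_zero₂₁.2 ⟨isUnit_one, isUnit_one⟩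
  refine ⟨hunit.unit, ?_⟩
  rw [SemiconjBy, IsUnit.unit_spec, fromBlocks_multiply, fromBlocks_multiply, fromBlocks_inj]
  refine ⟨by simp, ?_, by simp, by simp⟩
  simp only [Matrix.mul_one, Matrix.mul_zero, Matrix.mul_neg, Matrix.neg_mul]
  abel

theorem det_aeval_eq_zero_of_dvd_charpoly {M : Matrix ι ι K} {f : K[X]} (hf : 0 < f.degree)
    (hfM : f ∣ M.charpoly) : (aeval M f).det = 0 := by
  let L := AlgebraicClosure K
  let φ : Matrix ι ι K →ₐ[K] Matrix ι ι L := (Algebra.ofId K L).mapMatrix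
  obtain ⟨μ, hμ⟩ := IsAlgClosed.exists_aeval_eq_zero L f hf.ne'
  have hspec : μ ∈ spectrum L (φ M) := by
    refine mem_spectrum_of_isRoot_charpoly ?_
    have hφ : (φ M).charpoly = M.charpoly.map (algebraMap K L) := charpoly_map M _
    rw [hφ]
    refine IsRoot.dvd ?_ (Polynomial.map_dvd _ hfM)
    rwa [IsRoot, eval_map_algebraMap]
  have hzero : (0 : L) ∈ spectrum L (φ (aeval M f)) := by
    have := spectrum.subset_polynomial_aeval (φ M) (f.map (algebraMap K L)) ⟨μ, hspec, rfl⟩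
    simpa only [aeval_map_algebraMap, aeval_algHom_apply, eval_map_algebraMap, hμ] using this
  rw [spectrum.zero_mem_iff, isUnit_iff_isUnit_det, isUnit_iff_ne_zero, not_not] at hzero
  have hdet : (φ (aeval M f)).det = algebraMap K L (aeval M f).det :=
    ((algebraMap K L).map_det _).symm
  rwa [hdet, map_eq_zero] at hzero

theorem isConj_toMatrix (b b' : Module.Basis ι K V) (T : Module.End K V) :
    IsConj (LinearMap.toMatrix b b T) (LinearMap.toMatrix b' b' T) := by
  have := b'.invertibleToMatrix b
  refine ⟨unitOfInvertible (b'.toMatrix b), ?_⟩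
  rw [SemiconjBy, val_unitOfInvertible, basis_toMatrix_mul_linearMap_toMatrix,
    linearMap_toMatrix_mul_basis_toMatrix]

theorem toMatrix_prodEquivOfIsCompl {V₁ V₂ : Submodule K V} (hV : IsCompl V₁ V₂)
    (b₁ : Module.Basis ι K V₁) (b₂ : Module.Basis κ K V₂) {T : Module.End K V}
    (h₁ : ∀ x ∈ V₁, T x ∈ V₁) (h₂ : ∀ x ∈ V₂, T x ∈ V₂) :
    LinearMap.toMatrix ((b₁.prod b₂).map (Submodule.prodEquivOfIsCompl V₁ V₂ hV))
        ((b₁.prod b₂).map (Submodule.prodEquivOfIsCompl V₁ V₂ hV)) T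
      = fromBlocks (LinearMap.toMatrix b₁ b₁ (T.restrict h₁)) 0 0
          (LinearMap.toMatrix b₂ b₂ (T.restrict h₂)) := by
  set e := Submodule.prodEquivOfIsCompl V₁ V₂ hV with he
  have hrestrict : e.symm.toLinearMap ∘ₗ T ∘ₗ e.toLinearMap
      = (T.restrict h₁).prodMap (T.restrict h₂) := by
    rw [LinearEquiv.toLinearMap_symm_comp_eq]
    ext x <;> simp [he]
  rw [← LinearMap.toMatrix_prodMap, ← hrestrict]
  ext i j
  simp [LinearMap.toMatrix_apply]

theorem apply_mem_ker_aeval (T : Module.End K V) (p : K[X]) :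
    ∀ x ∈ LinearMap.ker (aeval T p), T x ∈ LinearMap.ker (aeval T p) := by
  intro x hx
  have hcomm : T ∘ₗ aeval T p = aeval T p ∘ₗ T := comp_aeval_eq_aeval_comp rfl p
  rw [LinearMap.mem_ker] at hx ⊢
  rw [← LinearMap.comp_apply, ← hcomm, LinearMap.comp_apply, hx, map_zero]

theorem aeval_restrict_ker_aeval (T : Module.End K V) (p : K[X]) :
    aeval (T.restrict (apply_mem_ker_aeval T p)) p = 0 := by
  have hcomm := comp_aeval_eq_aeval_comp (S := T.restrict (apply_mem_ker_aeval T p)) (T := T)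
    (φ := (LinearMap.ker (aeval T p)).subtype) rfl p
  ext x : 2
  exact (LinearMap.congr_fun hcomm x).trans x.2

theorem aeval_toMatrix_restrict_ker_aeval (T : Module.End K V) (p : K[X])
    (b : Module.Basis κ K (LinearMap.ker (aeval T p))) :
    aeval (LinearMap.toMatrix b b (T.restrict (apply_mem_ker_aeval T p))) p = 0 := by
  have := aeval_algHom_apply (LinearMap.toMatrixAlgEquiv b)
    (T.restrict (apply_mem_ker_aeval T p)) p
  rwa [aeval_restrict_ker_aeval, map_zero] at this

theorem isCompl_ker_aeval {M : Matrix ι ι K} {f g : K[X]} (hfg : IsCoprime f g)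
    (hM : M.charpoly = f * g) :
    IsCompl (LinearMap.ker (aeval (toLin' M) f)) (LinearMap.ker (aeval (toLin' M) g)) := by
  refine ⟨disjoint_ker_aeval_of_isCoprime _ hfg, codisjoint_iff.2 ?_⟩
  rw [sup_ker_aeval_eq_ker_aeval_mul_of_coprime _ hfg, ← hM, aeval_toLin', aeval_self_charpoly,
    map_zero, LinearMap.ker_zero]

theorem exists_finrank_ker_aeval_eq_succ {M : Matrix ι ι K} {f : K[X]} (hf : 0 < f.natDegree)
    (hfM : f ∣ M.charpoly) :
    ∃ r, Module.finrank K (LinearMap.ker (aeval (toLin' M) f)) = r + 1 := by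
  refine Nat.exists_eq_add_one.2 (Nat.pos_iff_ne_zero.2 fun hrank => ?_)
  have hdet := det_aeval_eq_zero_of_dvd_charpoly (natDegree_pos_iff_degree_pos.1 hf) hfM
  obtain ⟨x, hx, hMx⟩ := exists_mulVec_eq_zero_iff.2 hdet
  refine hx ((Submodule.mem_bot K).1 (Submodule.finrank_eq_zero.1 hrank ▸ ?_))
  rwa [LinearMap.mem_ker, aeval_toLin']

theorem IsNonprimary.exists_isConj_reindex_fromBlocks {M : Matrix ι ι K} (hM : IsNonprimary M) :
    ∃ (r s : ℕ) (e : Fin (r + 1) ⊕ Fin (s + 1) ≃ ι) (M₁ : Matrix _ _ K) (M₂ : Matrix _ _ K),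
      ∀ Z, IsConj M (reindex e e (fromBlocks M₁ Z 0 M₂)) := by
  obtain ⟨f, g, -, -, hf, hg, hfg, hfgM⟩ := hM
  obtain ⟨r, hr⟩ := exists_finrank_ker_aeval_eq_succ hf ⟨g, hfgM⟩
  obtain ⟨s, hs⟩ := exists_finrank_ker_aeval_eq_succ hg (Dvd.intro_left f hfgM.symm)
  set T := toLin' M
  let b₁ := Module.finBasisOfFinrankEq K _ hr
  let b₂ := Module.finBasisOfFinrankEq K _ hs
  have hcompl := isCompl_ker_aeval hfg hfgM
  let b := (b₁.prod b₂).map (Submodule.prodEquivOfIsCompl _ _ hcompl)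
  let e := b.indexEquiv (Pi.basisFun K ι)
  have hMb : IsConj M (reindex e e (LinearMap.toMatrix b b T)) := by
    have hreindex : LinearMap.toMatrix (b.reindex e) (b.reindex e) T
        = reindex e e (LinearMap.toMatrix b b T) := by
      ext i j
      simp [LinearMap.toMatrix_apply]
    rw [← hreindex, ← LinearMap.toMatrix'_toLin' M, ← LinearMap.toMatrix_eq_toMatrix']
    exact isConj_toMatrix _ _ _
  rw [toMatrix_prodEquivOfIsCompl hcompl b₁ b₂ (apply_mem_ker_aeval T f)
    (apply_mem_ker_aeval T g)] at hMb
  have hb₁ := aeval_toMatrix_restrict_ker_aeval T f b₁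
  have hb₂ := aeval_toMatrix_restrict_ker_aeval T g b₂
  exact ⟨r, s, e, _, _, fun Z =>
    hMb.trans (isConj_reindex (isConj_fromBlocks_diagonal_of_isCoprime hfg hb₁ hb₂ Z) e)⟩

end BlockDecomposition

section Product

variable {ι κ K : Type*} [Fintype ι] [DecidableEq ι] [Fintype κ] [DecidableEq κ] [Field K]

theorem IsCyclicMat.reindex {A : Matrix ι ι K} (hA : IsCyclicMat A) (e : ι ≃ κ) :
    IsCyclicMat (Matrix.reindex e e A) := by
  rw [IsCyclicMat, charpoly_reindex, hA]
  exact (minpoly.algEquiv_eq (reindexAlgEquiv K K e) A).symm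

theorem isConj_mul_comm_of_isUnit {G : Type*} [Monoid G] {a : G} (ha : IsUnit a) (b : G) :
    IsConj (b * a) (a * b) :=
  ⟨ha.unit, (mul_assoc a b a).symm⟩

theorem exists_eq_mul_of_isConj_mul {G : Type*} [Monoid G] {a b m : G} (h : IsConj (a * b) m) :
    ∃ a' b', IsConj a a' ∧ IsConj b b' ∧ m = a' * b' := by
  obtain ⟨c, hc⟩ := h
  refine ⟨c * a * ↑c⁻¹, c * b * ↑c⁻¹, ⟨c, c.mk_semiconjBy a⟩, ⟨c, c.mk_semiconjBy b⟩, ?_⟩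
  rw [(Units.eq_mul_inv_iff_mul_eq c).2 hc.eq.symm]
  simp only [mul_assoc, Units.inv_mul_cancel_left]

theorem exists_isConj_mul_eq_fromBlocks {r s : ℕ} {M₁ : Matrix (Fin (r + 1)) (Fin (r + 1)) K}
    {M₂ : Matrix (Fin (s + 1)) (Fin (s + 1)) K}
    {A B : Matrix (Fin (r + 1) ⊕ Fin (s + 1)) (Fin (r + 1) ⊕ Fin (s + 1)) K}
    (hA : IsCyclicMat A) (hB : IsCyclicMat B) (hM₁ : M₁.det ≠ 0) (hM₂ : M₂.det ≠ 0)
    (hdet : M₁.det * M₂.det = A.det * B.det) :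
    ∃ Z A' B', IsConj A A' ∧ IsConj B B' ∧ fromBlocks M₁ Z 0 M₂ = A' * B' := by
  have hBdet : B.det ≠ 0 := right_ne_zero_of_mul (hdet ▸ mul_ne_zero hM₁ hM₂)
  obtain ⟨R, C, u, rfl, hR, hRu, hCu⟩ := exists_eq_mul_isCyclicVector hM₂ one_ne_zero
  rw [det_mul, hR, one_mul] at hM₂ hdet
  obtain ⟨Q, P, w, hPQ, hQ, hQw, hPw⟩ :=
    exists_eq_mul_isCyclicVector (N := M₁ᵀ) (by rwa [det_transpose]) (div_ne_zero hBdet hM₂)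
  obtain rfl : M₁ = Pᵀ * Qᵀ := by rw [← transpose_mul, ← hPQ, transpose_transpose]
  have hBQC : B.det = Qᵀ.det * C.det := by rw [det_transpose, hQ, div_mul_cancel₀ _ hM₂]
  have hAPR : A.det = Pᵀ.det * R.det := by
    rw [det_mul, mul_assoc, ← hBQC] at hdet
    rw [hR, mul_one, mul_right_cancel₀ hBdet hdet]
  have hRunit : IsUnit R := (isUnit_iff_isUnit_det R).2 (hR ▸ isUnit_one)
  have hCunit : IsUnit C := (isUnit_iff_isUnit_det C).2 (isUnit_iff_ne_zero.2 hM₂)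
  obtain ⟨Y, hAconj⟩ := hA.exists_isConj_fromBlocks_mul_cornerTransvection
    (w := w) (by rwa [transpose_transpose]) hRu hRunit hAPR
  obtain ⟨Y', hBconj⟩ := hB.exists_isConj_fromBlocks_mul_cornerTransvection
    (w := w) (by rwa [transpose_transpose]) hCu.neg hCunit hBQC
  have hswap : IsConj (fromBlocks Qᵀ Y' 0 C * cornerTransvection (-u) w)
      (cornerTransvection (-u) w * fromBlocks Qᵀ Y' 0 C) :=
    isConj_mul_comm_of_isUnit
      (IsUnit.of_mul_eq_one_right _ (cornerTransvection_mul_neg u w)) _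
  refine ⟨Pᵀ * Y' + Y * C, _, _, hAconj, hBconj.trans hswap, ?_⟩
  rw [Matrix.mul_assoc, ← Matrix.mul_assoc (cornerTransvection u w), cornerTransvection_mul_neg,
    Matrix.one_mul, fromBlocks_multiply]
  simp

theorem IsNonprimary.exists_eq_mul_isConj {A B M : Matrix ι ι K} (hMnp : IsNonprimary M)
    (hM : IsUnit M.det) (hcA : IsCyclicMat A) (hcB : IsCyclicMat B)
    (hdet : M.det = A.det * B.det) :
    ∃ A' B', IsConj A A' ∧ IsConj B B' ∧ M = A' * B' := by
  obtain ⟨r, s, e, M₁, M₂, hblocks⟩ := hMnp.exists_isConj_reindex_fromBlocks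
  have hM₁₂ : M₁.det * M₂.det = M.det := by
    rw [det_eq_of_isConj (hblocks 0), det_reindex_self, det_fromBlocks_zero₂₁]
  have hne : M₁.det * M₂.det ≠ 0 := hM₁₂ ▸ hM.ne_zero
  obtain ⟨Z, A', B', hA', hB', hZ⟩ := exists_isConj_mul_eq_fromBlocks (hcA.reindex e.symm)
    (hcB.reindex e.symm) (left_ne_zero_of_mul hne) (right_ne_zero_of_mul hne)
    (by rw [hM₁₂, hdet, det_reindex_self, det_reindex_self])
  have hABM : IsConj (reindex e e A' * reindex e e B') M := by
    rw [← coe_reindexAlgEquiv K K, ← map_mul, ← hZ]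
    exact (hblocks Z).symm
  obtain ⟨A'', B'', hA'', hB'', hM⟩ := exists_eq_mul_of_isConj_mul hABM
  refine ⟨A'', B'', .trans ?_ hA'', .trans ?_ hB'', hM⟩
  · simpa using isConj_reindex hA' e
  · simpa using isConj_reindex hB' e

end Product

theorem product_of_cyclic_classes_contains_nonprimary {K : Type*} [Field K] {n : ℕ}
    (hn : 2 ≤ n) (A B : Matrix (Fin n) (Fin n) K)
    (hA : IsUnit A.det) (hB : IsUnit B.det)
    (hcA : IsCyclicMat A) (hcB : IsCyclicMat B)
    (M : Matrix (Fin n) (Fin n) K) (hM : IsUnit M.det)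
    (hMnp : IsNonprimary M) (hdet : M.det = A.det * B.det) :
    ∃ X Y : Matrix (Fin n) (Fin n) K, IsUnit X.det ∧ IsUnit Y.det ∧
      M = (X * A * X⁻¹) * (Y * B * Y⁻¹) := by
  obtain ⟨A', B', hA', hB', rfl⟩ := hMnp.exists_eq_mul_isConj hM hcA hcB hdet
  obtain ⟨X, hX, rfl⟩ := isConj_iff_exists_isUnit.1 hA'
  obtain ⟨Y, hY, rfl⟩ := isConj_iff_exists_isUnit.1 hB'
  exact ⟨X, Y, (isUnit_iff_isUnit_det X).1 hX, (isUnit_iff_isUnit_det Y).1 hY, rfl⟩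
end
end

section
/- Let K be a field and V a 2n-dimensional K-vector space equipped with a nondegenerate alternating bilinear form f. Let φ be a symplectic transformation of (V, f) (an invertible linear map with f(φx, φy) = f(x, y) for all x, y). If dim ker(φ − id) = n, then there exists an n-dimensional subspace T of V that is totally degenerate (f(x, y) = 0 for all x, y ∈ T) and anti-invariant for φ, i.e., T ∩ φ(T) = 0 (so V = T ⊕ φ(T)). -/
open Module

noncomputable section

/-!
Let `F = ker (φ - id)`. Since `φ` preserves `f`, the range of `φ - id` lies in `Fᗮ`. If `t` and
`φ t` both lie in `T`, then so does `φ t - t`, so `T` is anti-invariant as soon as it meets both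
`F` and `Fᗮ` trivially.

Take `T` maximal among the totally degenerate subspaces with this property. A vector of `Tᗮ`
outside `(T + F) ∪ (T + Fᗮ)` could be adjoined to `T`, so there is none. A vector space is not the
union of two proper subspaces, so `Tᗮ ⊆ T + F` or `Tᗮ ⊆ T + Fᗮ`; say the former. Then
`(T + F)ᗮ ⊆ Tᗮᗮ ∩ Fᗮ = T ∩ Fᗮ = 0`, that is, `T + F = V`. Hence `T` is a complement of `F` or of
`Fᗮ`, and both have dimension `n`.
-/

section DivisionRing

variable {K V : Type*} [DivisionRing K] [AddCommGroup V] [Module K V]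

theorem disjoint_sup_span_singleton_of_notMem_sup {T F : Submodule K V} {v : V}
    (h : Disjoint T F) (hv : v ∉ T ⊔ F) : Disjoint (T ⊔ K ∙ v) F := by
  rw [sup_comm]
  exact h.disjoint_sup_left_of_disjoint_sup_right
    (Submodule.disjoint_span_singleton_of_notMem hv).symm

end DivisionRing

section Ring

variable {R M : Type*} [Ring R] [AddCommGroup M] [Module R M]

theorem disjoint_map_of_disjoint_ker_sub_id_of_disjoint_range_sub_id {φ : M →ₗ[R] M}
    {T : Submodule R M} (hker : Disjoint T (LinearMap.ker (φ - LinearMap.id)))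
    (hrange : Disjoint T (LinearMap.range (φ - LinearMap.id))) : Disjoint T (T.map φ) := by
  rw [Submodule.disjoint_def]
  rintro _ hφt ⟨t, ht, rfl⟩
  have hfix : φ t - t = 0 :=
    Submodule.disjoint_def.1 hrange _ (T.sub_mem hφt ht) ⟨t, rfl⟩
  have ht0 : t = 0 := Submodule.disjoint_def.1 hker t ht hfix
  rw [ht0, map_zero]

end Ring

section CommRing

variable {R M : Type*} [CommRing R] [AddCommGroup M] [Module R M] {f : LinearMap.BilinForm R M}

theorem range_sub_id_le_orthogonal_ker_sub_id {φ : M →ₗ[R] M} (hφ : f.IsOrthogonal φ) :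
    LinearMap.range (φ - LinearMap.id) ≤ f.orthogonal (LinearMap.ker (φ - LinearMap.id)) := by
  rintro _ ⟨x, rfl⟩ y hy
  have hfix : φ y = y := sub_eq_zero.1 hy
  calc f y (φ x - x) = f (φ y) (φ x) - f y x := by rw [map_sub, hfix]
    _ = 0 := sub_eq_zero.2 (hφ y x)

/-- A submodule on which the bilinear form `f` vanishes identically, called isotropic in
symplectic geometry. -/
def IsTotallyDegenerate (f : LinearMap.BilinForm R M) (T : Submodule R M) : Prop :=
  ∀ x ∈ T, ∀ y ∈ T, f x y = 0

theorem isTotallyDegenerate_bot : IsTotallyDegenerate f ⊥ := by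
  rintro x hx y -
  rw [(Submodule.mem_bot R).1 hx, map_zero, LinearMap.zero_apply]

theorem IsTotallyDegenerate.sup_span_singleton (halt : f.IsAlt) {T : Submodule R M}
    (hT : IsTotallyDegenerate f T) {v : M} (hv : v ∈ f.orthogonal T) :
    IsTotallyDegenerate f (T ⊔ R ∙ v) := by
  intro x hx y hy
  obtain ⟨s, hs, _, ha, rfl⟩ := Submodule.mem_sup.1 hx
  obtain ⟨a, rfl⟩ := Submodule.mem_span_singleton.1 ha
  obtain ⟨t, ht, _, hb, rfl⟩ := Submodule.mem_sup.1 hy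
  obtain ⟨b, rfl⟩ := Submodule.mem_span_singleton.1 hb
  have hsv : f s v = 0 := hv s hs
  have hvt : f v t = 0 := halt.isRefl t v (hv t ht)
  simp [hT s hs t ht, hsv, hvt, halt v]

end CommRing

section Field

variable {K V : Type*} [Field K] [AddCommGroup V] [Module K V] [FiniteDimensional K V]
  {f : LinearMap.BilinForm K V}

theorem codisjoint_of_orthogonal_le_sup (hnd : f.Nondegenerate) (hrefl : f.IsRefl)
    {T F : Submodule K V} (hdisj : Disjoint T (f.orthogonal F)) (hle : f.orthogonal T ≤ T ⊔ F) :
    Codisjoint T F := by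
  have hleT : f.orthogonal (T ⊔ F) ≤ T :=
    (LinearMap.BilinForm.orthogonal_le hle).trans_eq (f.orthogonal_orthogonal hnd hrefl T)
  have hleF : f.orthogonal (T ⊔ F) ≤ f.orthogonal F := f.orthogonal_le le_sup_right
  have hbot : f.orthogonal (T ⊔ F) = ⊥ := le_bot_iff.1 (hdisj hleT hleF)
  rw [codisjoint_iff, ← f.orthogonal_orthogonal hnd hrefl (T ⊔ F), hbot, f.orthogonal_bot]

theorem exists_isTotallyDegenerate_disjoint_orthogonal_le_sup (halt : f.IsAlt)
    (F G : Submodule K V) :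
    ∃ T : Submodule K V, IsTotallyDegenerate f T ∧ Disjoint T F ∧ Disjoint T G ∧
      (f.orthogonal T ≤ T ⊔ F ∨ f.orthogonal T ≤ T ⊔ G) := by
  obtain ⟨T, ⟨hT, hTF, hTG⟩, hmax⟩ := exists_maximal_of_wellFoundedGT
    (fun T : Submodule K V ↦ IsTotallyDegenerate f T ∧ Disjoint T F ∧ Disjoint T G)
    ⟨⊥, isTotallyDegenerate_bot, disjoint_bot_left, disjoint_bot_left⟩
  refine ⟨T, hT, hTF, hTG, AddSubgroupClass.subset_union.1 fun v hv ↦ ?_⟩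
  by_contra hvFG
  obtain ⟨hvF, hvG⟩ : v ∉ T ⊔ F ∧ v ∉ T ⊔ G := not_or.1 hvFG
  have hle : T ⊔ K ∙ v ≤ T := hmax
    ⟨hT.sup_span_singleton halt hv, disjoint_sup_span_singleton_of_notMem_sup hTF hvF,
      disjoint_sup_span_singleton_of_notMem_sup hTG hvG⟩ le_sup_left
  have hvT : v ∈ T := hle (Submodule.mem_sup_right (Submodule.mem_span_singleton_self v))
  exact hvF (Submodule.mem_sup_left hvT)

theorem exists_isTotallyDegenerate_disjoint_isCompl_or_isCompl (hnd : f.Nondegenerate)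
    (halt : f.IsAlt) (F : Submodule K V) :
    ∃ T : Submodule K V, IsTotallyDegenerate f T ∧ Disjoint T F ∧ Disjoint T (f.orthogonal F) ∧
      (IsCompl T F ∨ IsCompl T (f.orthogonal F)) := by
  obtain ⟨T, hT, hTF, hTF', hle⟩ :=
    exists_isTotallyDegenerate_disjoint_orthogonal_le_sup halt F (f.orthogonal F)
  have hTF'' : Disjoint T (f.orthogonal (f.orthogonal F)) := by
    rwa [f.orthogonal_orthogonal hnd halt.isRefl]
  exact ⟨T, hT, hTF, hTF', hle.imp
    (fun h ↦ ⟨hTF, codisjoint_of_orthogonal_le_sup hnd halt.isRefl hTF' h⟩)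
    (fun h ↦ ⟨hTF', codisjoint_of_orthogonal_le_sup hnd halt.isRefl hTF'' h⟩)⟩

end Field

theorem exists_totally_degenerate_anti_invariant {K V : Type*} [Field K]
    [AddCommGroup V] [Module K V] [FiniteDimensional K V] {n : ℕ}
    (f : LinearMap.BilinForm K V) (hnd : f.Nondegenerate)
    (halt : ∀ v : V, f v v = 0)
    (hdim : Module.finrank K V = 2 * n)
    (φ : V ≃ₗ[K] V) (hφ : ∀ x y : V, f (φ x) (φ y) = f x y)
    (hfix : Module.finrank K (LinearMap.ker (φ.toLinearMap - LinearMap.id)) = n) :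
    ∃ T : Submodule K V, Module.finrank K T = n ∧
      (∀ x ∈ T, ∀ y ∈ T, f x y = 0) ∧
      T ⊓ T.map φ.toLinearMap = ⊥ ∧ T ⊔ T.map φ.toLinearMap = ⊤ := by
  set F := LinearMap.ker (φ.toLinearMap - LinearMap.id)
  obtain ⟨T, hT, hTF, hTF', hcompl⟩ :=
    exists_isTotallyDegenerate_disjoint_isCompl_or_isCompl hnd halt F
  have hfinrank : finrank K T = n := by
    have hF' := f.finrank_orthogonal hnd F
    rcases hcompl with h | h <;> have := Submodule.finrank_add_eq_of_isCompl h <;> lia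
  have hdisj : Disjoint T (T.map φ.toLinearMap) :=
    disjoint_map_of_disjoint_ker_sub_id_of_disjoint_range_sub_id hTF
      (hTF'.mono_right (range_sub_id_le_orthogonal_ker_sub_id hφ))
  have hisCompl : IsCompl T (T.map φ.toLinearMap) := by
    refine (Submodule.isCompl_iff_disjoint _ _ ?_).2 hdisj
    rw [LinearEquiv.finrank_map_eq φ T, hfinrank, hdim, two_mul]
  exact ⟨T, hfinrank, hT, hisCompl.inf_eq_bot, hisCompl.sup_eq_top⟩
end
end

section
/- Let K be a field of characteristic 2 and P ∈ Sp(4, K) a nonscalar matrix. Then there exists Q ∈ Sp(4, K) such that the upper-left 2×2 block A of Q P Q⁻¹ satisfies one of the following: (a) A is a transvection (A ≠ I₂, (A − I₂)² = 0, rank(A − I₂) = 1), or (b) A is invertible and nonprimary with det A = 1 (its characteristic polynomial is a product of two coprime nonconstant monic polynomials). -/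
open Matrix Polynomial

noncomputable section

/-- The standard symplectic form matrix `G = [[0, Iₙ], [-Iₙ, 0]]`. -/
def sympJ (n : ℕ) (K : Type*) [Field K] : Matrix (Fin n ⊕ Fin n) (Fin n ⊕ Fin n) K :=
  Matrix.fromBlocks 0 1 (-1) 0

/-- Membership in the standard symplectic group `Sp(2n, K)`: `P G Pᵀ = G`. -/
def IsSymplectic {n : ℕ} {K : Type*} [Field K]
    (P : Matrix (Fin n ⊕ Fin n) (Fin n ⊕ Fin n) K) : Prop :=
  P * sympJ n K * Pᵀ = sympJ n K

/-!
Let `ω` be the symplectic form on row vectors and let `P` act on them from the right. For rows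
`x`, `y` of a matrix `E` spanning an `ω`-isotropic plane, let `B` be the matrix of `ω(· P, ·)` on
that plane. If `B` is invertible, then for every symmetric `S` the rows of `E` and of
`S E - B⁻¹ E P` form a symplectic basis, and the corresponding conjugate of `P` has corner `B S`.
For a suitable `S` the product `B S` is a transvection or has eigenvalues `l ≠ l⁻¹`.

If instead `B` is singular for every isotropic plane, then `P` is, up to sign, a symplectic
transvection `x ↦ x + b ω(x, t) t`. A symplectic basis `e₁, e₂, f₁, f₂` with `t = e₂ + f₁` then
exhibits the corner `[[1, b], [0, 1]]`.
-/

section BilinearForms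

variable {K V W : Type*} [Field K] [AddCommGroup V] [Module K V] [AddCommGroup W] [Module K W]

lemma exists_eq_smul_of_forall_apply_eq_zero {β ω : V →ₗ[K] W →ₗ[K] K}
    (h : ∀ x y, ω x y = 0 → β x y = 0) : ∃ k : K, β = k • ω := by
  by_cases hω : ∀ x y, ω x y = 0
  · exact ⟨0, by ext x y; simp [h x y (hω x y)]⟩
  push Not at hω
  obtain ⟨a, b, hab⟩ := hω
  have right (x y y') : ω x y' * β x y = ω x y * β x y' := by
    have := h x (ω x y' • y - ω x y • y') (by simp [mul_comm])
    simpa [sub_eq_zero] using this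
  have left (x x' y) : ω x' y * β x y = ω x y * β x' y := by
    have := h (ω x' y • x - ω x y • x') y (by simp [mul_comm])
    simpa [sub_eq_zero] using this
  have of_ne_zero (x y) (hx : ω x b ≠ 0) : ω a b * β x y = β a b * ω x y := by
    apply mul_left_cancel₀ hx
    linear_combination ω a b * right x y b + ω x y * left x a b
  refine ⟨β a b / ω a b, LinearMap.ext₂ fun x y ↦ ?_⟩
  suffices ω a b * β x y = β a b * ω x y by
    simp only [LinearMap.smul_apply, smul_eq_mul]
    field_simp
    linear_combination this
  by_cases hx : ω x b = 0
  · have := of_ne_zero (x + a) y (by simpa [hx] using hab)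
    simp only [map_add, LinearMap.add_apply] at this
    linear_combination this - of_ne_zero a y hab
  · exact of_ne_zero x y hx

/-- A bilinear form `β` is degenerate on every plane that is isotropic for `ω`. For `β = ω(g ·, ·)`
with `g` an isometry of a symplectic space of dimension four, this says that no Lagrangian plane is
transverse to its image under `g`. -/
def DegenerateOnIsotropicPlanes (ω β : LinearMap.BilinForm K V) : Prop :=
  ∀ x y, ω x y = 0 → β x x * β y y = β x y * β y x

lemma DegenerateOnIsotropicPlanes.exists_eq_smul {ω β : LinearMap.BilinForm K V}
    (h : DegenerateOnIsotropicPlanes ω β) (hβ : β.IsAlt) : ∃ k : K, β = k • ω := by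
  refine exists_eq_smul_of_forall_apply_eq_zero fun x y hxy ↦ ?_
  simpa [hβ.self_eq_zero, ← hβ.neg_eq x y] using h x y hxy

lemma exists_ne_zero_of_two_lt_finrank (hV : 2 < Module.finrank K V) (φ ψ : V →ₗ[K] K) :
    ∃ z, z ≠ 0 ∧ φ z = 0 ∧ ψ z = 0 := by
  have : FiniteDimensional K V := Module.finite_of_finrank_pos (by lia)
  have hker : LinearMap.ker (φ.prod ψ) ≠ ⊥ :=
    LinearMap.ker_ne_bot_of_finrank_lt (by simpa using hV)
  obtain ⟨z, hz, hz0⟩ := Submodule.exists_mem_ne_zero_of_ne_bot hker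
  exact ⟨z, hz0, by simpa using hz⟩

lemma exists_eq_add_orthogonal {ω : LinearMap.BilinForm K V} (hω : ω.IsAlt) {u v : V}
    (huv : ω u v ≠ 0) (x : V) :
    ∃ (a b : K) (z : V), ω u z = 0 ∧ ω v z = 0 ∧ x = a • u + b • v + z := by
  refine ⟨ω x v / ω u v, ω u x / ω u v, x - (ω x v / ω u v) • u - (ω u x / ω u v) • v, ?_, ?_,
    by module⟩
  · simp [hω.self_eq_zero, huv]
  · simp [hω.self_eq_zero, ← hω.neg_eq u v, ← hω.neg_eq v x, huv]

lemma exists_apply_eq_one {ω : LinearMap.BilinForm K V} (hnd : ω.Nondegenerate) {x : V}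
    (hx : x ≠ 0) : ∃ y, ω x y = 1 := by
  obtain ⟨y, hy⟩ : ∃ y, ω x y ≠ 0 := by
    contrapose! hx
    exact hnd.1 x hx
  exact ⟨(ω x y)⁻¹ • y, by simp [hy]⟩

lemma exists_symplectic_basis_add_eq {ω : LinearMap.BilinForm K V} (hω : ω.IsAlt)
    (hnd : ω.Nondegenerate) (hV : 2 < Module.finrank K V) {t : V} (ht : t ≠ 0) :
    ∃ e₁ e₂ f₁ f₂ : V, (ω e₁ e₂ = 0 ∧ ω f₁ f₂ = 0) ∧
      (ω e₁ f₁ = 1 ∧ ω e₁ f₂ = 0 ∧ ω e₂ f₁ = 0 ∧ ω e₂ f₂ = 1) ∧ t = e₂ + f₁ := by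
  obtain ⟨e, he⟩ := exists_apply_eq_one hnd ht
  obtain ⟨e₂, he₂, htz, hez⟩ := exists_ne_zero_of_two_lt_finrank hV (ω t) (ω e)
  obtain ⟨y, hy⟩ := exists_apply_eq_one hnd he₂
  refine ⟨-e, e₂, t - e₂, y + ω e y • (t - e₂) - ω (t - e₂) y • e, ?_⟩
  simp [hω.self_eq_zero, ← hω.neg_eq t e, ← hω.neg_eq t e₂, ← hω.neg_eq e e₂, he, htz, hez, hy]

end BilinearForms

section Isometries

variable {K V : Type*} [Field K] [AddCommGroup V] [Module K V]
  {ω : LinearMap.BilinForm K V} {g : V →ₗ[K] V} {u : V}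

lemma exists_map_eq_smul_add_smul_of_orthogonal (hω : ω.IsAlt) (hnd : ω.Nondegenerate)
    (hg : ∀ x y, ω (g x) (g y) = ω x y) (h : DegenerateOnIsotropicPlanes ω (ω ∘ₗ g))
    (hu : ω u (g u) ≠ 0) :
    ∃ k : K, ∀ z, ω u z = 0 → ω (g u) z = 0 →
      ∃ c : K, g z = k • z + c • g u := by
  let W := LinearMap.ker (ω u) ⊓ LinearMap.ker (ω (g u))
  have hu' : ω (g u) u ≠ 0 := by rwa [← hω.neg_eq, neg_ne_zero]
  have hgW (z) (hz : z ∈ W) : ω (g z) z = 0 := by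
    have := h u z hz.1
    simp_all [W]
  obtain ⟨k, hk⟩ : ∃ k : K, LinearMap.BilinForm.restrict (ω ∘ₗ g) W = k • ω.restrict W :=
    DegenerateOnIsotropicPlanes.exists_eq_smul (fun x y ↦ h x y) fun z ↦ hgW z z.2
  refine ⟨k, fun z huz hvz ↦
    ⟨ω (g z) u / ω (g u) u, sub_eq_zero.1 (hnd.1 _ fun x ↦ ?_)⟩⟩
  obtain ⟨a, b, z', huz', hvz', rfl⟩ := exists_eq_add_orthogonal hω hu x
  have hzz' : ω (g z) z' = k * ω z z' :=
    congr($hk ⟨z, by simp [W, *]⟩ ⟨z', by simp [W, *]⟩)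
  have hzu : ω z u = 0 := by rw [← hω.neg_eq, huz, neg_zero]
  have hzv : ω z (g u) = 0 := by rw [← hω.neg_eq, hvz, neg_zero]
  simp only [map_add, map_sub, map_smul, LinearMap.add_apply, LinearMap.sub_apply,
    LinearMap.smul_apply, smul_eq_mul, hg, hzu, hzv, hzz', hvz', hω.self_eq_zero, mul_zero,
    add_zero, zero_add]
  field_simp
  ring

lemma exists_map_eq_smul_of_orthogonal (hω : ω.IsAlt) (hnd : ω.Nondegenerate)
    (hg : ∀ x y, ω (g x) (g y) = ω x y) (h : DegenerateOnIsotropicPlanes ω (ω ∘ₗ g))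
    (hu : ω u (g u) ≠ 0) :
    ∃ k : K, ∀ z, ω u z = 0 → ω (g u) z = 0 → g z = k • z := by
  obtain ⟨k, hk⟩ := exists_map_eq_smul_add_smul_of_orthogonal hω hnd hg h hu
  refine ⟨k, fun z huz hvz ↦ ?_⟩
  have hzu : ω z u = 0 := by rw [← hω.neg_eq, huz, neg_zero]
  have hzv : ω z (g u) = 0 := by rw [← hω.neg_eq, hvz, neg_zero]
  obtain ⟨c, hz⟩ := hk z huz hvz
  have hprod : c * ω (g (g u)) z = 0 := by
    have := h z (u + g u) (by simp [hzu, hzv])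
    simpa [hg, hz, hω.self_eq_zero, hzu, hzv, hvz, ← hω.neg_eq u (g u), hu] using this
  suffices c = 0 by simpa [this] using hz
  refine (mul_eq_zero.1 hprod).elim id fun hvz' ↦ ?_
  rw [← hω.neg_eq, neg_eq_zero] at hvz'
  simpa [hz, hvz', hzv, hg, hu] using hg z (g u)

lemma exists_orthogonal_apply_eq_one (hω : ω.IsAlt) (hnd : ω.Nondegenerate)
    (hV : 2 < Module.finrank K V) {v : V} (huv : ω u v ≠ 0) :
    ∃ z z' : V, (ω u z = 0 ∧ ω v z = 0) ∧ (ω u z' = 0 ∧ ω v z' = 0) ∧ ω z z' = 1 := by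
  obtain ⟨z, hz, huz, hvz⟩ := exists_ne_zero_of_two_lt_finrank hV (ω u) (ω v)
  obtain ⟨x, hx⟩ := exists_apply_eq_one hnd hz
  obtain ⟨a, b, z', huz', hvz', rfl⟩ := exists_eq_add_orthogonal hω huv x
  refine ⟨z, z', ⟨huz, hvz⟩, ⟨huz', hvz'⟩, ?_⟩
  simpa [← hω.neg_eq u z, ← hω.neg_eq v z, huz, hvz] using hx

lemma map_map_eq_smul_sub (hω : ω.IsAlt) (hnd : ω.Nondegenerate) (hV : 2 < Module.finrank K V)
    (hg : ∀ x y, ω (g x) (g y) = ω x y) (h : DegenerateOnIsotropicPlanes ω (ω ∘ₗ g))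
    (hu : ω u (g u) ≠ 0) {k : K} (hk : k ^ 2 = 1)
    (hgk : ∀ z, ω u z = 0 → ω (g u) z = 0 → g z = k • z) :
    g (g u) = (2 * k) • g u - u := by
  have hvu : ω (g u) u = -ω u (g u) := (hω.neg_eq _ _).symm
  obtain ⟨δ, hδ⟩ : ∃ δ, g (g u) = δ • g u - u := by
    refine ⟨ω (g (g u)) u / ω (g u) u, sub_eq_zero.1 (hnd.1 _ fun x ↦ ?_)⟩
    obtain ⟨a, b, z, huz, hvz, rfl⟩ := exists_eq_add_orthogonal hω hu x
    have hgz : ω (g (g u)) z = 0 := by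
      have : k ≠ 0 := by rintro rfl; simp at hk
      simpa [hgk z huz hvz, this, hvz] using hg (g u) z
    simp only [map_add, map_sub, map_smul, LinearMap.sub_apply, LinearMap.smul_apply,
      smul_eq_mul, hg, huz, hvz, hgz, hvu, hω.self_eq_zero, mul_neg, mul_zero]
    field_simp
    ring
  obtain ⟨z, z', ⟨huz, hvz⟩, ⟨huz', hvz'⟩, hzz'⟩ := exists_orthogonal_apply_eq_one hω hnd hV hu
  -- The isotropic pair mixes `⟨u, g u⟩` with its complement, which ties `δ` to `k`.
  have hpair := h (u + z) (g u - ω u (g u) • z')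
    (by simp [huz', hzz', ← hω.neg_eq (g u) z, hvz])
  have hz'z : ω z' z = -1 := by rw [← hω.neg_eq, hzz']
  simp only [LinearMap.comp_apply, map_add, map_sub, map_smul, LinearMap.add_apply,
    LinearMap.sub_apply, LinearMap.smul_apply, smul_eq_mul, hδ, hgk z huz hvz, hgk z' huz' hvz',
    hω.self_eq_zero, hvu, huz, huz', hvz, hvz', hzz', hz'z, ← hω.neg_eq (g u) z,
    ← hω.neg_eq u z, ← hω.neg_eq (g u) z', ← hω.neg_eq u z'] at hpair
  have hkδ : k * δ = 2 := by
    apply mul_left_cancel₀ (pow_ne_zero 2 hu)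
    linear_combination - hpair + ω u (g u) ^ 2 * hk
  rw [hδ, show δ = 2 * k by linear_combination k * hkδ - δ * hk]

theorem DegenerateOnIsotropicPlanes.exists_eq_smul_add_transvection (hω : ω.IsAlt)
    (hnd : ω.Nondegenerate) (hV : 2 < Module.finrank K V) (hg : ∀ x y, ω (g x) (g y) = ω x y)
    (h : DegenerateOnIsotropicPlanes ω (ω ∘ₗ g)) :
    ∃ (k b : K) (t : V), k ^ 2 = 1 ∧ ∀ x, g x = k • x + (b * ω x t) • t := by
  have sq_eq_one {k : K} {x y : V} (hxy : ω x y = 1) (hx : g x = k • x) (hy : g y = k • y) :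
      k ^ 2 = 1 := by simpa [hx, hy, hxy, sq] using hg x y
  by_cases halt : ∀ x, ω (g x) x = 0
  · obtain ⟨k, hk⟩ := h.exists_eq_smul halt
    have hgk (x : V) : g x = k • x :=
      sub_eq_zero.1 (hnd.1 _ fun y ↦ by simpa [sub_eq_zero] using congr($hk x y))
    have : Nontrivial V := Module.nontrivial_of_finrank_pos (R := K) (by lia)
    obtain ⟨x, hx⟩ := exists_ne (0 : V)
    obtain ⟨y, hxy⟩ := exists_apply_eq_one hnd hx
    exact ⟨k, 0, 0, sq_eq_one hxy (hgk x) (hgk y), fun x ↦ by simp [hgk]⟩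
  · push Not at halt
    obtain ⟨u, hu⟩ := halt
    replace hu : ω u (g u) ≠ 0 := by rwa [← hω.neg_eq, neg_ne_zero]
    obtain ⟨k, hgk⟩ := exists_map_eq_smul_of_orthogonal hω hnd hg h hu
    obtain ⟨z, z', ⟨huz, hvz⟩, ⟨huz', hvz'⟩, hzz'⟩ := exists_orthogonal_apply_eq_one hω hnd hV hu
    have hk : k ^ 2 = 1 := sq_eq_one hzz' (hgk z huz hvz) (hgk z' huz' hvz')
    refine ⟨k, (ω u (g u))⁻¹, g u - k • u, hk, fun x ↦ ?_⟩
    obtain ⟨a, b, z, huz, hvz, rfl⟩ := exists_eq_add_orthogonal hω hu x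
    have hx : ω (a • u + b • g u + z) (g u - k • u) = (a + b * k) * ω u (g u) := by
      simp only [map_add, map_sub, map_smul, LinearMap.add_apply, LinearMap.smul_apply,
        smul_eq_mul, hω.self_eq_zero, ← hω.neg_eq (g u) u, ← hω.neg_eq (g u) z, ← hω.neg_eq u z,
        huz, hvz]
      ring
    rw [hx, mul_comm (a + b * k), inv_mul_cancel_left₀ hu]
    simp only [map_add, map_smul, map_map_eq_smul_sub hω hnd hV hg h hu hk hgk, hgk z huz hvz]
    match_scalars
    · ring
    · linear_combination b * hk
    · ring

end Isometries

section TwoByTwo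

variable {K : Type*} [Field K]

lemma isTransvection_of_trace_eq_two {A : Matrix (Fin 2) (Fin 2) K} (hdet : A.det = 1)
    (htr : A.trace = 2) (hA : A ≠ 1) : IsTransvection A := by
  have hsq : (A - 1) * (A - 1) = 0 := by
    have hCH : A ^ 2 - 2 * A + 1 = 0 := by
      simpa [charpoly_fin_two, htr, hdet, map_ofNat (algebraMap K _)] using A.aeval_self_charpoly
    rw [← hCH]
    noncomm_ring
  have hle := rank_add_rank_le_card_of_mul_eq_zero hsq
  have hpos : (A - 1).rank ≠ 0 := by
    rw [Matrix.rank, Ne, Submodule.finrank_eq_zero, LinearMap.range_eq_bot, ← toLin'_apply',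
      LinearEquiv.map_eq_zero_iff, sub_eq_zero]
    exact hA
  rw [Fintype.card_fin] at hle
  exact ⟨hA, hsq, by lia⟩

lemma isNonprimary_of_trace_eq_add {A : Matrix (Fin 2) (Fin 2) K} {l m : K} (hlm : l ≠ m)
    (htr : A.trace = l + m) (hdet : A.det = l * m) : IsNonprimary A := by
  refine ⟨X - C l, X - C m, monic_X_sub_C l, monic_X_sub_C m, by simp, by simp,
    isCoprime_X_sub_C_of_isUnit_sub (sub_ne_zero.2 hlm).isUnit, ?_⟩
  rw [charpoly_fin_two, htr, hdet, map_add, map_mul]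
  ring

lemma isSymm_of_apply_zero_one_eq {α : Type*} {S : Matrix (Fin 2) (Fin 2) α}
    (h : S 0 1 = S 1 0) : S.IsSymm := by
  ext i j
  fin_cases i <;> fin_cases j <;> simp [h]

lemma exists_isSymm_det_trace_mul {B : Matrix (Fin 2) (Fin 2) K} (hdet : B.det ≠ 0)
    (hdiag : B 0 0 ≠ 0 ∨ B 1 1 ≠ 0) (l m : K) :
    ∃ S : Matrix (Fin 2) (Fin 2) K, S.IsSymm ∧ (B * S).det = l * m ∧ (B * S).trace = l + m := by
  -- For triangular `T`, symmetry of `B⁻¹ * T` is a linear equation for the off-diagonal entry of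
  -- `T`, with leading coefficient `B 0 0` or `B 1 1`.
  suffices ∃ S x, S.IsSymm ∧ (B * S = !![l, 0; x, m] ∨ B * S = !![l, x; 0, m]) by
    obtain ⟨S, x, hS, h | h⟩ := this <;>
      exact ⟨S, hS, by simp [h, det_fin_two_of], by simp [h, trace_fin_two_of]⟩
  have hB : B * B⁻¹ = 1 := mul_nonsing_inv B hdet.isUnit
  rcases hdiag with hp | hs
  · refine ⟨B⁻¹ * !![l, 0; (B 1 0 * l - B 0 1 * m) / B 0 0, m], _, isSymm_of_apply_zero_one_eq ?_,
      .inl (by rw [← mul_assoc, hB, one_mul])⟩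
    rw [inv_def, adjugate_fin_two, smul_mul, mul_fin_two, Ring.inverse_eq_inv']
    simp only [Matrix.smul_apply, of_apply, cons_val_zero, cons_val_one, cons_val',
      cons_val_fin_one, smul_eq_mul]
    field_simp
    ring
  · refine ⟨B⁻¹ * !![l, (B 0 1 * m - B 1 0 * l) / B 1 1; 0, m], _, isSymm_of_apply_zero_one_eq ?_,
      .inr (by rw [← mul_assoc, hB, one_mul])⟩
    rw [inv_def, adjugate_fin_two, smul_mul, mul_fin_two, Ring.inverse_eq_inv']
    simp only [Matrix.smul_apply, of_apply, cons_val_zero, cons_val_one, cons_val',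
      cons_val_fin_one, smul_eq_mul]
    field_simp
    ring

lemma exists_isSymm_isTransvection_mul_of_not_isSymm {B : Matrix (Fin 2) (Fin 2) K}
    (hB : B.det ≠ 0) (hdiag : B 0 0 ≠ 0 ∨ B 1 1 ≠ 0) (hsymm : ¬ B.IsSymm) :
    ∃ S : Matrix (Fin 2) (Fin 2) K, S.IsSymm ∧ IsTransvection (B * S) := by
  obtain ⟨S, hS, hdet, htr⟩ := exists_isSymm_det_trace_mul hB hdiag 1 1
  refine ⟨S, hS, isTransvection_of_trace_eq_two (by simpa using hdet)
    (by simpa [one_add_one_eq_two] using htr) fun h ↦ hsymm ?_⟩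
  rw [← inv_eq_left_inv h]
  exact hS.inv

variable [CharP K 2]

lemma exists_isSymm_isTransvection_mul_of_diag_eq_zero {B : Matrix (Fin 2) (Fin 2) K}
    (hB : B.det ≠ 0) (h₀ : B 0 0 = 0) (h₁ : B 1 1 = 0) :
    ∃ S : Matrix (Fin 2) (Fin 2) K, S.IsSymm ∧ IsTransvection (B * S) := by
  refine ⟨diagonal ![1, B.det⁻¹], isSymm_diagonal _,
    isTransvection_of_trace_eq_two ?_ ?_ fun h ↦ ?_⟩
  · simp [det_mul, hB]
  · simp [trace_fin_two, h₀, h₁, CharTwo.two_eq_zero]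
  · simpa [h₀] using congr($h 0 0)

lemma exists_isSymm_isTransvection_mul_or_isNonprimary_mul {B : Matrix (Fin 2) (Fin 2) K}
    (hB : B.det ≠ 0) : ∃ S : Matrix (Fin 2) (Fin 2) K, S.IsSymm ∧
      (IsTransvection (B * S) ∨ IsNonprimary (B * S) ∧ (B * S).det = 1) := by
  by_cases hdiag : B 0 0 = 0 ∧ B 1 1 = 0
  · obtain ⟨S, hS, hBS⟩ := exists_isSymm_isTransvection_mul_of_diag_eq_zero hB hdiag.1 hdiag.2
    exact ⟨S, hS, .inl hBS⟩
  rw [not_and_or] at hdiag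
  by_cases hsymm : B.IsSymm
  swap
  · obtain ⟨S, hS, hBS⟩ := exists_isSymm_isTransvection_mul_of_not_isSymm hB hdiag hsymm
    exact ⟨S, hS, .inl hBS⟩
  by_cases hK : ∃ l : K, l ≠ 0 ∧ l ≠ 1
  · obtain ⟨l, hl0, hl1⟩ := hK
    obtain ⟨S, hS, hdet, htr⟩ := exists_isSymm_det_trace_mul hB hdiag l l⁻¹
    rw [mul_inv_cancel₀ hl0] at hdet
    refine ⟨S, hS, .inr ⟨isNonprimary_of_trace_eq_add (fun h ↦ hl1 ?_) htr ?_, hdet⟩⟩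
    · exact CharTwo.sq_inj.1 (by rw [sq, one_pow, ← mul_inv_cancel₀ hl0, ← h])
    · rw [hdet, mul_inv_cancel₀ hl0]
  · push Not at hK
    refine ⟨!![0, 1; 1, 0], isSymm_of_apply_zero_one_eq rfl,
      .inl (isTransvection_of_trace_eq_two ?_ ?_ fun h ↦ ?_)⟩
    · simp [det_mul, hK _ hB, CharTwo.neg_eq]
    · simp [trace_fin_two, mul_apply, hsymm.apply 0 1, CharTwo.add_self_eq_zero,
        CharTwo.two_eq_zero]
    · have h₀ : B 0 0 = 0 := by simpa [mul_apply] using congr($h 0 1)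
      have h₁ : B 1 1 = 0 := by simpa [mul_apply] using congr($h 1 0)
      exact hdiag.elim (· h₀) (· h₁)

end TwoByTwo

section SymplecticForm

variable {n : ℕ} {K : Type*} [Field K]

/-- The symplectic form on row vectors with Gram matrix `sympJ n K`. -/
def sympForm (n : ℕ) (K : Type*) [Field K] : LinearMap.BilinForm K (Fin n ⊕ Fin n → K) :=
  Matrix.toBilin' (sympJ n K)

lemma sympJ_eq_neg_J : sympJ n K = -J (Fin n) K := by
  simp [sympJ, J, fromBlocks_neg]

lemma sympJ_transpose : (sympJ n K)ᵀ = -sympJ n K := by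
  simp [sympJ_eq_neg_J]

lemma sympJ_mul_sympJ : sympJ n K * sympJ n K = -1 := by
  simp [sympJ_eq_neg_J, J_squared]

lemma IsSymplectic.inv_eq {P : Matrix (Fin n ⊕ Fin n) (Fin n ⊕ Fin n) K} (hP : IsSymplectic P) :
    P⁻¹ = -(sympJ n K * Pᵀ * sympJ n K) :=
  inv_eq_right_inv <| by
    rw [mul_neg, ← mul_assoc, ← mul_assoc, hP, sympJ_mul_sympJ, neg_neg]

lemma of_mul_sympJ_mul_transpose {ι κ : Type*} (x : ι → Fin n ⊕ Fin n → K)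
    (y : κ → Fin n ⊕ Fin n → K) :
    of x * sympJ n K * (of y)ᵀ = of fun i j ↦ sympForm n K (x i) (y j) := by
  ext i j
  rw [of_apply, sympForm, toBilin'_apply', dotProduct_mulVec]
  rfl

lemma of_pair_mul_sympJ_mul_transpose (x₁ x₂ y₁ y₂ : Fin n ⊕ Fin n → K) :
    of ![x₁, x₂] * sympJ n K * (of ![y₁, y₂])ᵀ =
      !![sympForm n K x₁ y₁, sympForm n K x₁ y₂; sympForm n K x₂ y₁, sympForm n K x₂ y₂] := by
  rw [of_mul_sympJ_mul_transpose, ← etaExpand_eq (of _)]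
  rfl

lemma sympForm_isAlt : (sympForm n K).IsAlt := fun x ↦ by
  simp [sympForm, toBilin'_apply', sympJ, dotProduct, Fintype.sum_sum_type, mulVec,
    fromBlocks, one_apply, mul_comm]

lemma sympForm_nondegenerate : (sympForm n K).Nondegenerate :=
  LinearMap.BilinForm.nondegenerate_toBilin'_of_det_ne_zero' _ <| by
    rw [sympJ_eq_neg_J, det_neg]
    exact (((isUnit_one.neg.pow _).mul (isUnit_det_J _ _))).ne_zero

lemma IsSymplectic.sympForm_vecMul {P : Matrix (Fin n ⊕ Fin n) (Fin n ⊕ Fin n) K}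
    (hP : IsSymplectic P) (x y : Fin n ⊕ Fin n → K) :
    sympForm n K (x ᵥ* P) (y ᵥ* P) = sympForm n K x y := by
  rw [sympForm, toBilin'_apply', toBilin'_apply', ← mulVec_transpose P y, dotProduct_mulVec,
    dotProduct_mulVec, vecMul_vecMul, vecMul_vecMul,
    ← Matrix.mul_assoc, hP, dotProduct_mulVec]

end SymplecticForm

section Frames

variable {n : ℕ} {K : Type*} [Field K] {P : Matrix (Fin n ⊕ Fin n) (Fin n ⊕ Fin n) K}

lemma isSymplectic_fromRows_iff {E F : Matrix (Fin n) (Fin n ⊕ Fin n) K} :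
    IsSymplectic (fromRows E F) ↔
      E * sympJ n K * Eᵀ = 0 ∧ E * sympJ n K * Fᵀ = 1 ∧ F * sympJ n K * Fᵀ = 0 := by
  have hFE : F * sympJ n K * Eᵀ = -(E * sympJ n K * Fᵀ)ᵀ := by
    simp [transpose_mul, sympJ_transpose, Matrix.mul_assoc]
  rw [IsSymplectic, transpose_fromRows, fromRows_mul, fromRows_mul_fromCols, hFE,
    show sympJ n K = fromBlocks 0 1 (-1) 0 from rfl, fromBlocks_inj]
  refine ⟨fun ⟨hEE, hEF, _, hFF⟩ ↦ ⟨hEE, hEF, hFF⟩, fun ⟨hEE, hEF, hFF⟩ ↦ ⟨hEE, hEF, ?_, hFF⟩⟩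
  change -(E * sympJ n K * Fᵀ)ᵀ = -1
  rw [show E * sympJ n K * Fᵀ = 1 from hEF, transpose_one]

lemma toBlocks₁₁_conj_fromRows {E F : Matrix (Fin n) (Fin n ⊕ Fin n) K}
    (hEF : IsSymplectic (fromRows E F)) (P : Matrix (Fin n ⊕ Fin n) (Fin n ⊕ Fin n) K) :
    (fromRows E F * P * (fromRows E F)⁻¹).toBlocks₁₁ = E * P * sympJ n K * Fᵀ := by
  have hinv : (fromRows E F)⁻¹ = fromCols (sympJ n K * Fᵀ) (-(sympJ n K * Eᵀ)) := by
    have hcols : fromCols Eᵀ Fᵀ * sympJ n K = fromCols (-Fᵀ) Eᵀ := by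
      simp [sympJ, fromCols_mul_fromBlocks]
    rw [hEF.inv_eq, transpose_fromRows, Matrix.mul_assoc, hcols, mul_fromCols, fromCols_neg,
      Matrix.mul_neg, neg_neg]
  rw [fromRows_mul, hinv, fromRows_mul_fromCols, toBlocks_fromBlocks₁₁, ← Matrix.mul_assoc]

lemma exists_isSymplectic_toBlocks₁₁_conj_eq (hP : IsSymplectic P)
    {E : Matrix (Fin n) (Fin n ⊕ Fin n) K} (hE : E * sympJ n K * Eᵀ = 0)
    (hdet : (E * P * sympJ n K * Eᵀ).det ≠ 0) {S : Matrix (Fin n) (Fin n) K} (hS : S.IsSymm) :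
    ∃ Q, IsSymplectic Q ∧ (Q * P * Q⁻¹).toBlocks₁₁ = E * P * sympJ n K * Eᵀ * S := by
  set B := E * P * sympJ n K * Eᵀ with hB
  have hBt : Bᵀ = -(E * sympJ n K * Pᵀ * Eᵀ) := by
    simp [hB, transpose_mul, sympJ_transpose, Matrix.mul_assoc]
  let F := S * E - B⁻¹ * (E * P)
  have hFt : Fᵀ = Eᵀ * S - Pᵀ * Eᵀ * Bᵀ⁻¹ := by
    simp [F, transpose_mul, transpose_nonsing_inv, hS.eq, Matrix.mul_assoc]
  have hEPF : E * P * sympJ n K * Fᵀ = B * S := by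
    have : E * P * sympJ n K * (Pᵀ * Eᵀ * Bᵀ⁻¹) = 0 := by
      calc _ = E * (P * sympJ n K * Pᵀ) * Eᵀ * Bᵀ⁻¹ := by simp only [Matrix.mul_assoc]
        _ = 0 := by rw [hP, hE, Matrix.zero_mul]
    rw [hFt, Matrix.mul_sub, this, sub_zero, ← Matrix.mul_assoc]
  have hEF : E * sympJ n K * Fᵀ = 1 := by
    rw [hFt, Matrix.mul_sub, ← Matrix.mul_assoc, hE, Matrix.zero_mul, zero_sub,
      ← Matrix.mul_assoc, ← Matrix.mul_assoc, ← Matrix.neg_mul, ← hBt]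
    exact mul_nonsing_inv _ (by simpa using hdet)
  have hFF : F * sympJ n K * Fᵀ = 0 := by
    simp only [F, Matrix.sub_mul, Matrix.mul_assoc] at hEPF hEF ⊢
    rw [hEF, hEPF, nonsing_inv_mul_cancel_left _ _ hdet.isUnit, Matrix.mul_one, sub_self]
  have hQ : IsSymplectic (fromRows E F) := isSymplectic_fromRows_iff.2 ⟨hE, hEF, hFF⟩
  exact ⟨fromRows E F, hQ, by rw [toBlocks₁₁_conj_fromRows hQ, hEPF]⟩

end Frames

section Corners

variable {K : Type*} [Field K] {P : Matrix (Fin 2 ⊕ Fin 2) (Fin 2 ⊕ Fin 2) K}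

lemma exists_toBlocks₁₁_conj_isTransvection_or_isNonprimary [CharP K 2] (hP : IsSymplectic P)
    (h : ¬ DegenerateOnIsotropicPlanes (sympForm 2 K) (sympForm 2 K ∘ₗ P.vecMulLinear)) :
    ∃ Q, IsSymplectic Q ∧ (IsTransvection (Q * P * Q⁻¹).toBlocks₁₁ ∨
      IsNonprimary (Q * P * Q⁻¹).toBlocks₁₁ ∧ (Q * P * Q⁻¹).toBlocks₁₁.det = 1) := by
  rw [DegenerateOnIsotropicPlanes] at h
  push Not at h
  obtain ⟨x, y, hxy, hdet⟩ := h
  have hyx : sympForm 2 K y x = 0 := by rw [← sympForm_isAlt.neg_eq, hxy, neg_zero]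
  have hE : of ![x, y] * sympJ 2 K * (of ![x, y])ᵀ = 0 := by
    rw [of_pair_mul_sympJ_mul_transpose, eta_fin_two (0 : Matrix (Fin 2) (Fin 2) K)]
    simp [sympForm_isAlt.self_eq_zero, hxy, hyx]
  have hB : (of ![x, y] * P * sympJ 2 K * (of ![x, y])ᵀ).det ≠ 0 := by
    have hP : of ![x, y] * P = of ![x ᵥ* P, y ᵥ* P] := by simp
    rw [hP, of_pair_mul_sympJ_mul_transpose, det_fin_two_of]
    exact sub_ne_zero.2 hdet
  obtain ⟨S, hS, hBS⟩ := exists_isSymm_isTransvection_mul_or_isNonprimary_mul hB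
  obtain ⟨Q, hQ, hcorner⟩ := exists_isSymplectic_toBlocks₁₁_conj_eq hP hE hB hS
  exact ⟨Q, hQ, by rwa [hcorner]⟩

lemma exists_toBlocks₁₁_conj_isTransvection {b : K} {t : Fin 2 ⊕ Fin 2 → K} (hb : b ≠ 0)
    (ht : t ≠ 0) (hPt : ∀ x, x ᵥ* P = x + (b * sympForm 2 K x t) • t) :
    ∃ Q, IsSymplectic Q ∧ IsTransvection (Q * P * Q⁻¹).toBlocks₁₁ := by
  obtain ⟨e₁, e₂, f₁, f₂, ⟨he, hf⟩, ⟨h₁₁, h₁₂, h₂₁, h₂₂⟩, rfl⟩ :=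
    exists_symplectic_basis_add_eq sympForm_isAlt sympForm_nondegenerate (by simp) ht
  have hQ : IsSymplectic (fromRows (of ![e₁, e₂]) (of ![f₁, f₂])) := by
    have he' : sympForm 2 K e₂ e₁ = 0 := by rw [← sympForm_isAlt.neg_eq, he, neg_zero]
    have hf' : sympForm 2 K f₂ f₁ = 0 := by rw [← sympForm_isAlt.neg_eq, hf, neg_zero]
    rw [isSymplectic_fromRows_iff, of_pair_mul_sympJ_mul_transpose,
      of_pair_mul_sympJ_mul_transpose, of_pair_mul_sympJ_mul_transpose, one_fin_two,
      eta_fin_two (0 : Matrix (Fin 2) (Fin 2) K)]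
    simp [sympForm_isAlt.self_eq_zero, *]
  have hcorner : of ![e₁, e₂] * P * sympJ 2 K * (of ![f₁, f₂])ᵀ = !![1, b; 0, 1] := by
    have hP : of ![e₁, e₂] * P = of ![e₁ ᵥ* P, e₂ ᵥ* P] := by simp
    rw [hP, of_pair_mul_sympJ_mul_transpose]
    simp [sympForm_isAlt.self_eq_zero, *]
  refine ⟨_, hQ, ?_⟩
  rw [toBlocks₁₁_conj_fromRows hQ, hcorner]
  refine isTransvection_of_trace_eq_two (by simp) (by simp [one_add_one_eq_two]) fun h ↦ hb ?_
  simpa using congr($h 0 1)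

end Corners

theorem principal_corner_sp4_char_two {K : Type*} [Field K] [CharP K 2]
    (P : Matrix (Fin 2 ⊕ Fin 2) (Fin 2 ⊕ Fin 2) K) (hP : IsSymplectic P)
    (hns : ∀ c : K, P ≠ c • (1 : Matrix (Fin 2 ⊕ Fin 2) (Fin 2 ⊕ Fin 2) K)) :
    ∃ Q : Matrix (Fin 2 ⊕ Fin 2) (Fin 2 ⊕ Fin 2) K, IsSymplectic Q ∧
      (IsTransvection ((Q * P * Q⁻¹).toBlocks₁₁) ∨
        (IsUnit ((Q * P * Q⁻¹).toBlocks₁₁).det ∧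
          IsNonprimary ((Q * P * Q⁻¹).toBlocks₁₁) ∧
          ((Q * P * Q⁻¹).toBlocks₁₁).det = 1)) := by
  by_cases h : DegenerateOnIsotropicPlanes (sympForm 2 K) (sympForm 2 K ∘ₗ P.vecMulLinear)
  · obtain ⟨k, b, t, hk, hPt⟩ := h.exists_eq_smul_add_transvection sympForm_isAlt
      sympForm_nondegenerate (by simp) hP.sympForm_vecMul
    obtain rfl : k = 1 := CharTwo.sq_inj.1 (by rw [hk, one_pow])
    have hbt : b ≠ 0 ∧ t ≠ 0 := by
      rw [← not_or]
      refine fun hbt ↦ hns 1 (ext_of_single_vecMul fun i ↦ (hPt _).trans ?_)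
      rcases hbt with rfl | rfl <;> simp
    obtain ⟨Q, hQ, hcorner⟩ := exists_toBlocks₁₁_conj_isTransvection hbt.1 hbt.2
      fun x ↦ (hPt x).trans (by rw [one_smul])
    exact ⟨Q, hQ, .inl hcorner⟩
  · obtain ⟨Q, hQ, hcorner⟩ := exists_toBlocks₁₁_conj_isTransvection_or_isNonprimary hP h
    exact ⟨Q, hQ, hcorner.imp_right fun ⟨hprim, hdet⟩ ↦ ⟨hdet ▸ isUnit_one, hprim, hdet⟩⟩
end
end
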